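/- arXiv:1107.0124 — 3 statements merged into one kernel-verified Lean document; each statement's English description precedes it below -/
import Mathlib

section
/- Let d ≥ 1, let I be a metric space, let S : I → Matrix d d ℂ be continuous, and let Λ ⊆ Σ_I^+ be a nonempty compact θ_+-invariant subset. Then the generalized spectral radius equals the joint spectral radius: ρ(S|Λ) = ρ̂(S|Λ). -/
open Filter Topology MeasureTheory

/-- Operator norm on `d × d` complex matrices induced by the Euclidean norm on `ℂ^d`. -/
noncomputable def opNorm {d : ℕ} (A : Matrix (Fin d) (Fin d) ℂ) : ℝ :=
  ‖Matrix.toEuclideanCLM (𝕜 := ℂ) A‖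

/-- Spectral radius of a complex matrix, as a real number. -/
noncomputable def specRad {d : ℕ} (A : Matrix (Fin d) (Fin d) ℂ) : ℝ :=
  (spectralRadius ℂ A).toReal

/-- `prodS S x n = S_{i_n} ⋯ S_{i_1}` where `i_k = x (k-1)`. -/
noncomputable def prodS {d : ℕ} {I : Type*} (S : I → Matrix (Fin d) (Fin d) ℂ)
    (x : ℕ → I) : ℕ → Matrix (Fin d) (Fin d) ℂ
  | 0 => 1
  | n + 1 => S (x n) * prodS S x n

/-- `Λ` is invariant under the one-sided shift `θ₊`. -/
def ShiftInv {I : Type*} (Λ : Set (ℕ → I)) : Prop :=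
  ∀ x ∈ Λ, (fun n => x (n + 1)) ∈ Λ

/-- Joint spectral radius of `S` restricted to `Λ`. -/
noncomputable def jsr {d : ℕ} {I : Type*} (S : I → Matrix (Fin d) (Fin d) ℂ)
    (Λ : Set (ℕ → I)) : ℝ :=
  Filter.limsup (fun n : ℕ => ⨆ x : Λ, opNorm (prodS S x.1 n) ^ (1 / (n : ℝ))) Filter.atTop

/-- Generalized spectral radius of `S` restricted to `Λ`. -/
noncomputable def gsr {d : ℕ} {I : Type*} (S : I → Matrix (Fin d) (Fin d) ℂ)
    (Λ : Set (ℕ → I)) : ℝ :=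
  Filter.limsup (fun n : ℕ => ⨆ x : Λ, specRad (prodS S x.1 n) ^ (1 / (n : ℝ))) Filter.atTop

/-!
If all products of consecutive terms among the first `K` matrices of a sequence are nilpotent, and
`K` is large enough in terms of the dimension, then the product of these `K` matrices is zero. To
lower the rank of long products from `r`, factor the blocks as `P i * Q i` through an
`r`-dimensional space: either some `Q (i + 1) * P i` is singular, and the rank drops, or nilpotency
forces `det (Q i * P j) = 0` for all `i ≤ j` while `det (Q (i + 1) * P i) ≠ 0`, and the skew
Bollobás theorem bounds the number of blocks.

By the Nullstellensatz this vanishing has a quantitative form: for matrices of norm at most `α`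
whose products of `m` consecutive terms have spectral radius at most `δ * α ^ m`, some fixed power
of the norm of the product is at most `C * δ * (α ^ K) ^ k`. Apply this to blocks of length `m` of
the system, with `α ^ m` in place of `α` for `α` slightly above the joint spectral radius `J`, and
with `δ = (γ / α) ^ m` for `γ` slightly above the generalized one. Since `C` does not depend on `m`,
taking `m`-th roots and letting `α` tend to `J` gives `J ≤ γ`.
-/

section SegProd

variable {R : Type*} [Monoid R]

/-- The product `M (a + n - 1) * ⋯ * M (a + 1) * M a` of the `n` consecutive terms of the sequence
`M` starting at index `a`; later terms stand on the left, as in the evolution of a linear system. -/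
def segProd (M : ℕ → R) (a : ℕ) : ℕ → R
  | 0 => 1
  | n + 1 => M (a + n) * segProd M a n

lemma segProd_add (M : ℕ → R) (a m n : ℕ) :
    segProd M a (m + n) = segProd M (a + m) n * segProd M a m := by
  induction n with
  | zero => simp [segProd]
  | succ n ih => rw [← add_assoc, segProd, ih, segProd, mul_assoc, add_assoc]

lemma segProd_congr {M N : ℕ → R} {a n : ℕ} (h : ∀ i < n, M (a + i) = N (a + i)) :
    segProd M a n = segProd N a n := by
  induction n with
  | zero => rfl
  | succ n ih => rw [segProd, segProd, ih fun i hi => h i (hi.trans n.lt_succ_self), h n (by simp)]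

lemma map_segProd {R' F : Type*} [Monoid R'] [FunLike F R R'] [MonoidHomClass F R R'] (f : F)
    (M : ℕ → R) (a n : ℕ) : f (segProd M a n) = segProd (fun i => f (M i)) a n := by
  induction n with
  | zero => simp [segProd]
  | succ n ih => rw [segProd, segProd, map_mul, ih]

lemma segProd_shift (M : ℕ → R) (c a n : ℕ) :
    segProd (fun i => M (c + i)) a n = segProd M (c + a) n := by
  induction n with
  | zero => rfl
  | succ n ih => rw [segProd, segProd, ih, add_assoc]

lemma segProd_blocks (M : ℕ → R) (m a n : ℕ) :
    segProd (fun i => segProd M (i * m) m) a n = segProd M (a * m) (n * m) := by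
  induction n with
  | zero => simp [segProd]
  | succ n ih => rw [segProd, ih, add_one_mul n m, segProd_add, ← add_mul]

lemma segProd_smul {k : Type*} [CommMonoid k] [MulAction k R] [IsScalarTower k R R]
    [SMulCommClass k R R] (z : k) (M : ℕ → R) (a n : ℕ) :
    segProd (fun i => z • M i) a n = z ^ n • segProd M a n := by
  induction n with
  | zero => simp [segProd]
  | succ n ih => rw [segProd, segProd, ih, smul_mul_smul_comm, pow_succ']

lemma isUnit_segProd {M : ℕ → R} {a n : ℕ} (h : ∀ i < n, IsUnit (M (a + i))) :
    IsUnit (segProd M a n) := by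
  induction n with
  | zero => exact isUnit_one
  | succ n ih => exact (h n n.lt_succ_self).mul (ih fun i hi => h i (hi.trans n.lt_succ_self))

end SegProd

/-- Every product of consecutive terms among the first `K` terms of `M` is nilpotent. -/
def SegNilpotent {R : Type*} [MonoidWithZero R] (M : ℕ → R) (K : ℕ) : Prop :=
  ∀ a n, 0 < n → a + n ≤ K → IsNilpotent (segProd M a n)

namespace SegNilpotent

variable {R : Type*} [MonoidWithZero R] {M : ℕ → R}

lemma shift {c m K : ℕ} (h : SegNilpotent M K) (hK : c + m ≤ K) :
    SegNilpotent (fun i => M (c + i)) m := by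
  intro a n hn han
  rw [segProd_shift]
  exact h _ _ hn (by omega)

lemma blocks {m L : ℕ} (hm : 0 < m) (h : SegNilpotent M (L * m)) :
    SegNilpotent (fun i => segProd M (i * m) m) L := by
  intro a n hn han
  rw [segProd_blocks]
  exact h _ _ (Nat.mul_pos hn hm) (by rw [← add_mul]; exact Nat.mul_le_mul_right m han)

end SegNilpotent

section Rank

variable {F : Type*} [Field F] {n : Type*} [Fintype n]

lemma exists_eq_mul_of_rank_le {l : Type*} {A : Matrix l n F} {r : ℕ}
    (hA : A.rank ≤ r) :
    ∃ (P : Matrix l (Fin r) F) (Q : Matrix (Fin r) n F), A = P * Q := by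
  classical
  obtain ⟨e, he⟩ : ∃ e : LinearMap.range A.mulVecLin →ₗ[F] (Fin r → F), Function.Injective e :=
    finrank_le_iff_exists_linearMap.mp (by simpa [Matrix.rank] using hA)
  obtain ⟨e', he'⟩ := e.exists_leftInverse_of_injective (LinearMap.ker_eq_bot.mpr he)
  refine ⟨LinearMap.toMatrix' ((LinearMap.range A.mulVecLin).subtype ∘ₗ e'),
    LinearMap.toMatrix' (e ∘ₗ A.mulVecLin.rangeRestrict), ?_⟩
  rw [← LinearMap.toMatrix'_comp, LinearMap.comp_assoc, ← LinearMap.comp_assoc _ e, he',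
    LinearMap.id_comp, LinearMap.subtype_comp_codRestrict, ← Matrix.toLin'_apply',
    LinearMap.toMatrix'_toLin']

lemma rank_lt_card_of_not_isUnit [DecidableEq n] {A : Matrix n n F} (hA : ¬IsUnit A) :
    A.rank < Fintype.card n := by
  refine A.rank_le_card_width.lt_of_ne fun hrank => hA ?_
  rw [← Matrix.mulVec_surjective_iff_isUnit]
  exact LinearMap.range_eq_top.mp
    (Submodule.eq_top_of_finrank_eq (hrank.trans (Module.finrank_fintype_fun_eq_card F).symm))

lemma isNilpotent_mul_swap {R : Type*} [Semiring R] {m l : Type*} [Fintype m] [Fintype l]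
    [DecidableEq m] [DecidableEq l] {A : Matrix m l R} {B : Matrix l m R}
    (h : IsNilpotent (A * B)) : IsNilpotent (B * A) := by
  obtain ⟨k, hk⟩ := h
  have swap_pow (k : ℕ) : (B * A) ^ (k + 1) = B * (A * B) ^ k * A := by
    induction k with
    | zero => simp
    | succ k ih => rw [pow_succ, ih, pow_succ]; simp only [Matrix.mul_assoc]
  exact ⟨k + 1, by rw [swap_pow, hk, Matrix.mul_zero, Matrix.zero_mul]⟩

end Rank

section SkewBollobas

variable {F : Type*} [Field F]

lemma linearIndependent_of_triangular_dual {V : Type*} [AddCommGroup V] [Module F V] {N : ℕ}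
    {v : Fin N → V} {φ : Fin N → V →ₗ[F] F} (hdiag : ∀ i, φ i (v i) ≠ 0)
    (hupper : ∀ i j, i < j → φ i (v j) = 0) : LinearIndependent F v := by
  let G : Matrix (Fin N) (Fin N) F := Matrix.of fun i j => φ i (v j)
  have hdet : G.det ≠ 0 := by
    rw [Matrix.det_of_isLowerTriangular (M := G) fun i j hij => hupper i j hij]
    exact Finset.prod_ne_zero_iff.mpr fun i _ => hdiag i
  exact LinearIndependent.of_comp (LinearMap.pi φ)
    (Matrix.linearIndependent_cols_of_det_ne_zero hdet)

/-- A skew form of the Bollobás two families theorem for subspaces, proved by Lovász's method: the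
multilinear forms `Q ↦ det (Q * P j)` are linearly independent. -/
lemma le_finrank_of_skew_det {n : Type*} [Fintype n] {r N : ℕ}
    (P : Fin N → Matrix n (Fin r) F) (Q : Fin N → Matrix (Fin r) n F)
    (hdiag : ∀ i, (Q i * P i).det ≠ 0) (hupper : ∀ i j, i < j → (Q i * P j).det = 0) :
    N ≤ Module.finrank F (MultilinearMap F (fun _ : Fin r => n → F) F) := by
  let detForm (j : Fin N) : MultilinearMap F (fun _ : Fin r => n → F) F :=
    (Matrix.detRowAlternating.compLinearMap (P j).vecMulLinear).toMultilinearMap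
  let evalAt (i : Fin N) : MultilinearMap F (fun _ : Fin r => n → F) F →ₗ[F] F :=
    { toFun := fun ψ => ψ (Q i), map_add' := fun _ _ => rfl, map_smul' := fun _ _ => rfl }
  have hindep : LinearIndependent F detForm :=
    linearIndependent_of_triangular_dual (φ := evalAt) hdiag hupper
  simpa using hindep.fintype_card_le_finrank

end SkewBollobas

section NilpotentSegments

variable {F : Type*} [Field F] {n : Type*} [Fintype n] [DecidableEq n]

lemma segProd_succ_eq_of_factorization {r : ℕ} {N : ℕ → Matrix n n F}
    {P : ℕ → Matrix n (Fin r) F} {Q : ℕ → Matrix (Fin r) n F} {a k : ℕ}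
    (h : ∀ i ≤ a + k, N i = P i * Q i) :
    segProd N a (k + 1) = P (a + k) * segProd (fun j => Q (j + 1) * P j) a k * Q a := by
  induction k with
  | zero => simp [segProd, h a le_rfl]
  | succ k ih =>
    rw [segProd, ih fun i hi => h i (by omega), h _ le_rfl, segProd]
    simp only [Matrix.mul_assoc, add_assoc]

lemma rank_segProd_le {N : ℕ → Matrix n n F} {a k i m : ℕ} (hai : a ≤ i) (him : i + m ≤ a + k) :
    (segProd N a k).rank ≤ (segProd N i m).rank := by
  obtain ⟨s, rfl⟩ := Nat.exists_eq_add_of_le hai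
  obtain ⟨t, rfl⟩ : ∃ t, k = s + m + t := Nat.exists_eq_add_of_le (by omega)
  rw [segProd_add, segProd_add]
  exact (Matrix.rank_mul_le_right _ _).trans (Matrix.rank_mul_le_left _ _)

lemma rank_segProd_succ_lt {r L : ℕ} (hr : 0 < r)
    (hL : Module.finrank F (MultilinearMap F (fun _ : Fin r => n → F) F) < L)
    {N : ℕ → Matrix n n F} (hrank : ∀ i ≤ L, (N i).rank ≤ r) (hnil : SegNilpotent N (L + 1)) :
    (segProd N 0 (L + 1)).rank < r := by
  choose! P Q hPQ using fun i hi => exists_eq_mul_of_rank_le (hrank i hi)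
  by_contra! hge
  have hunit (i : ℕ) (hi : i < L) : IsUnit (Q (i + 1) * P i) := by
    by_contra hsing
    refine hge.not_gt ?_
    calc (segProd N 0 (L + 1)).rank ≤ (segProd N i 2).rank := rank_segProd_le (by omega) (by omega)
      _ = (P (i + 1) * (Q (i + 1) * P i * Q i)).rank := by
        rw [segProd_succ_eq_of_factorization fun j hj => hPQ j (by omega)]
        simp [segProd, Matrix.mul_assoc]
      _ ≤ (Q (i + 1) * P i * Q i).rank := Matrix.rank_mul_le_right _ _
      _ ≤ (Q (i + 1) * P i).rank := Matrix.rank_mul_le_left _ _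
      _ < r := by simpa using rank_lt_card_of_not_isUnit hsing
  have hdet (i k : ℕ) (hik : i + k ≤ L) : (Q i * P (i + k)).det = 0 := by
    have : Nonempty (Fin r) := Fin.pos_iff_nonempty.mp hr
    have hseg := hnil i (k + 1) k.succ_pos (by omega)
    rw [segProd_succ_eq_of_factorization fun j hj => hPQ j (by omega), Matrix.mul_assoc] at hseg
    have hprod := (isNilpotent_mul_swap hseg).not_isUnit
    rw [Matrix.mul_assoc, IsUnit.mul_iff, not_and] at hprod
    simpa [Matrix.isUnit_iff_isUnit_det] using
      hprod (isUnit_segProd fun j hj => hunit (i + j) (by omega))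
  refine hL.not_ge (le_finrank_of_skew_det (fun i : Fin L => P i) (fun i => Q (i + 1))
    (fun i => ((Matrix.isUnit_iff_isUnit_det _).mp (hunit i i.2)).ne_zero) fun i j hij => ?_)
  obtain ⟨k, hk⟩ := Nat.exists_eq_add_of_le (Nat.succ_le_of_lt hij)
  have := hdet (i + 1) k (by omega)
  rwa [← hk] at this

lemma exists_rank_segProd_le_of_succ {r K : ℕ} (hK : 0 < K)
    (h : ∀ M : ℕ → Matrix n n F, SegNilpotent M K → (segProd M 0 K).rank ≤ r + 1) :
    ∃ K' > 0, ∀ M : ℕ → Matrix n n F, SegNilpotent M K' → (segProd M 0 K').rank ≤ r := by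
  let L := Module.finrank F (MultilinearMap F (fun _ : Fin (r + 1) => n → F) F) + 1
  refine ⟨(L + 1) * K, by positivity, fun M hM => Nat.lt_succ_iff.mp ?_⟩
  have hblock (i : ℕ) (hi : i ≤ L) : (segProd M (i * K) K).rank ≤ r + 1 := by
    have hshift := h _ (hM.shift (c := i * K) (by nlinarith))
    rwa [segProd_shift] at hshift
  simpa only [segProd_blocks, zero_mul] using
    rank_segProd_succ_lt r.succ_pos (Nat.lt_succ_self _) hblock (hM.blocks hK)

theorem exists_segProd_eq_zero_of_segNilpotent (F n : Type*) [Field F] [Fintype n]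
    [DecidableEq n] :
    ∃ K > 0, ∀ M : ℕ → Matrix n n F, SegNilpotent M K → segProd M 0 K = 0 := by
  obtain ⟨K, hK, h⟩ := Nat.decreasingInduction (n := Fintype.card n)
    (motive := fun r _ => ∃ K > 0, ∀ M : ℕ → Matrix n n F,
      SegNilpotent M K → (segProd M 0 K).rank ≤ r)
    (fun r _ ⟨K, hK, h⟩ => exists_rank_segProd_le_of_succ hK h)
    ⟨1, one_pos, fun M _ => Matrix.rank_le_card_width _⟩ (Nat.zero_le _)
  refine ⟨K, hK, fun M hM => ?_⟩
  obtain ⟨P, Q, hPQ⟩ := exists_eq_mul_of_rank_le (h M hM)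
  rw [hPQ]
  ext
  simp [Matrix.mul_apply]

end NilpotentSegments

section PolynomialInequality

variable {𝕜 σ : Type*} [NormedField 𝕜] {s : Set (MvPolynomial σ 𝕜)} {X : Set (σ → 𝕜)}

lemma exists_norm_eval_le_of_mem_span (hX : IsCompact X) {h : MvPolynomial σ 𝕜}
    (hh : h ∈ Ideal.span s) :
    ∃ C : ℝ, ∀ x ∈ X, ∀ δ : ℝ, 0 ≤ δ → (∀ f ∈ s, ‖MvPolynomial.eval x f‖ ≤ δ) →
      ‖MvPolynomial.eval x h‖ ≤ C * δ := by
  induction hh using Submodule.span_induction with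
  | mem f hf => exact ⟨1, fun x _ δ _ hs => by simpa using hs f hf⟩
  | zero => exact ⟨0, fun x _ δ _ _ => by simp⟩
  | add f g _ _ ihf ihg =>
    obtain ⟨C, hC⟩ := ihf
    obtain ⟨D, hD⟩ := ihg
    refine ⟨C + D, fun x hx δ hδ hs => ?_⟩
    rw [map_add, add_mul]
    exact norm_add_le_of_le (hC x hx δ hδ hs) (hD x hx δ hδ hs)
  | smul p f _ ih =>
    obtain ⟨C, hC⟩ := ih
    obtain ⟨B, hB⟩ := hX.exists_bound_of_continuousOn (MvPolynomial.continuous_eval p).continuousOn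
    refine ⟨B * C, fun x hx δ hδ hs => ?_⟩
    rw [smul_eq_mul, map_mul, norm_mul, mul_assoc]
    exact mul_le_mul (hB x hx) (hC x hx δ hδ hs) (norm_nonneg _) ((norm_nonneg _).trans (hB x hx))

theorem exists_norm_eval_pow_le_of_vanishing [IsAlgClosed 𝕜] [Finite σ]
    (s : Set (MvPolynomial σ 𝕜)) (hX : IsCompact X) :
    ∃ k ≠ 0, ∀ g : MvPolynomial σ 𝕜,
      (∀ x, (∀ f ∈ s, MvPolynomial.eval x f = 0) → MvPolynomial.eval x g = 0) →
      ∃ C : ℝ, ∀ x ∈ X, ∀ δ : ℝ, 0 ≤ δ → (∀ f ∈ s, ‖MvPolynomial.eval x f‖ ≤ δ) →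
        ‖MvPolynomial.eval x g‖ ^ k ≤ C * δ := by
  obtain ⟨k, hk⟩ := (Ideal.span s).exists_radical_pow_le_of_fg (IsNoetherian.noetherian _)
  refine ⟨k + 1, k.succ_ne_zero, fun g hg => ?_⟩
  have hrad : g ∈ (Ideal.span s).radical := by
    rw [← MvPolynomial.vanishingIdeal_zeroLocus_eq_radical (K := 𝕜), MvPolynomial.zeroLocus_span,
      MvPolynomial.mem_vanishingIdeal_iff]
    exact hg
  have hmem : g ^ (k + 1) ∈ Ideal.span s :=
    hk (Ideal.pow_le_pow_right k.le_succ (Ideal.pow_mem_pow hrad _))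
  simpa only [map_pow, norm_pow] using exists_norm_eval_le_of_mem_span hX hmem

end PolynomialInequality

section CharpolyCoefficients

variable {n : Type*} [Fintype n] [DecidableEq n]

lemma isNilpotent_of_charpoly_coeff_eq_zero {R : Type*} [CommRing R] {A : Matrix n n R}
    (h : ∀ l < Fintype.card n, A.charpoly.coeff l = 0) : IsNilpotent A := by
  nontriviality R
  have hcharpoly : A.charpoly = Polynomial.X ^ Fintype.card n := by
    rw [A.charpoly_monic.as_sum, A.charpoly_natDegree_eq_dim, Finset.sum_eq_zero, add_zero]
    intro l hl
    rw [h l (Finset.mem_range.mp hl), map_zero, zero_mul]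
  exact ⟨Fintype.card n, by simpa [hcharpoly] using A.aeval_self_charpoly⟩

lemma norm_charpoly_coeff_le {A : Matrix n n ℂ} {δ : ℝ} (h0 : 0 ≤ δ) (h1 : δ ≤ 1)
    (h : ∀ μ ∈ spectrum ℂ A, ‖μ‖ ≤ δ) {l : ℕ} (hl : l < Fintype.card n) :
    ‖A.charpoly.coeff l‖ ≤ 2 ^ Fintype.card n * δ := by
  have hcoeff := Polynomial.coeff_le_of_roots_le (f := RingHom.id ℂ) l A.charpoly_monic
    (IsAlgClosed.splits _) fun μ hμ => h μ <| Matrix.mem_spectrum_iff_isRoot_charpoly.mpr <|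
      Polynomial.isRoot_of_mem_roots <| by simpa only [Polynomial.map_id] using hμ
  rw [Polynomial.map_id, A.charpoly_natDegree_eq_dim, mul_comm] at hcoeff
  refine hcoeff.trans (mul_le_mul ?_ ?_ (by positivity) (by positivity))
  · exact_mod_cast Nat.choose_le_two_pow _ l
  · simpa using pow_le_pow_of_le_one h0 h1 (Nat.sub_pos_of_lt hl)

end CharpolyCoefficients

section GenericSequence

variable (n : Type*) [Fintype n] [DecidableEq n] (K : ℕ)

/-- The sequence of `n × n` matrices whose terms with index at most `K` have independent
indeterminates as entries. Later terms repeat these, to keep the number of indeterminates finite. -/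
noncomputable def genericSeq (i : ℕ) : Matrix n n (MvPolynomial (Fin (K + 1) × n × n) ℂ) :=
  Matrix.of fun p q => MvPolynomial.X (Fin.ofNat (K + 1) i, p, q)

/-- The non-leading coefficients of the characteristic polynomials of all products of consecutive
terms among the first `K` terms of the generic sequence. Their common zeros are the sequences
satisfying `SegNilpotent`. -/
def segCharpolyCoeffs : Set (MvPolynomial (Fin (K + 1) × n × n) ℂ) :=
  {f | ∃ a m l, 0 < m ∧ a + m ≤ K ∧ l < Fintype.card n ∧
    f = (segProd (genericSeq n K) a m).charpoly.coeff l}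

variable {n K}

lemma map_eval_segProd_genericSeq (M : ℕ → Matrix n n ℂ) {a m : ℕ} (h : a + m ≤ K) :
    (segProd (genericSeq n K) a m).map (MvPolynomial.eval fun t => M t.1 t.2.1 t.2.2) =
      segProd M a m := by
  refine (map_segProd (MvPolynomial.eval _).mapMatrix _ a m).trans (segProd_congr fun i hi => ?_)
  have hmod : (a + i) % (K + 1) = a + i := Nat.mod_eq_of_lt (by omega)
  ext p q
  simp [genericSeq, hmod]

lemma eval_charpoly_coeff_segProd_genericSeq (M : ℕ → Matrix n n ℂ) {a m : ℕ} (h : a + m ≤ K)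
    (l : ℕ) :
    MvPolynomial.eval (fun t => M t.1 t.2.1 t.2.2)
      ((segProd (genericSeq n K) a m).charpoly.coeff l) = (segProd M a m).charpoly.coeff l := by
  rw [← map_eval_segProd_genericSeq M h, Matrix.charpoly_map, Polynomial.coeff_map]

lemma eval_segProd_genericSeq_eq_zero
    (hK : ∀ M : ℕ → Matrix n n ℂ, SegNilpotent M K → segProd M 0 K = 0)
    {x : Fin (K + 1) × n × n → ℂ} (hx : ∀ f ∈ segCharpolyCoeffs n K, MvPolynomial.eval x f = 0)
    (p q : n) : MvPolynomial.eval x (segProd (genericSeq n K) 0 K p q) = 0 := by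
  obtain ⟨M, rfl⟩ : ∃ M : ℕ → Matrix n n ℂ, (fun t => M t.1 t.2.1 t.2.2) = x :=
    ⟨fun i => Matrix.of fun p q => x (Fin.ofNat (K + 1) i, p, q), by ext t; simp⟩
  have hnil : SegNilpotent M K := fun a m hm ham =>
    isNilpotent_of_charpoly_coeff_eq_zero fun l hl => by
      rw [← eval_charpoly_coeff_segProd_genericSeq M ham]
      exact hx _ ⟨a, m, l, hm, ham, hl, rfl⟩
  have hzero := (map_eval_segProd_genericSeq M (zero_add K).le).trans (hK M hnil)
  exact congrFun₂ hzero p q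

theorem exists_norm_segProd_apply_pow_le (n : Type*) [Fintype n] [DecidableEq n] :
    ∃ K > 0, ∃ k ≠ 0, ∃ C : ℝ, ∀ M : ℕ → Matrix n n ℂ, (∀ i p q, ‖M i p q‖ ≤ 1) →
      ∀ δ : ℝ, 0 ≤ δ → δ ≤ 1 →
      (∀ a m, 0 < m → a + m ≤ K → ∀ μ ∈ spectrum ℂ (segProd M a m), ‖μ‖ ≤ δ) →
      ∀ p q, ‖segProd M 0 K p q‖ ^ k ≤ C * δ := by
  obtain ⟨K, hK, hzero⟩ := exists_segProd_eq_zero_of_segNilpotent ℂ n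
  obtain ⟨k, hk, hpow⟩ := exists_norm_eval_pow_le_of_vanishing (segCharpolyCoeffs n K)
    (isCompact_closedBall 0 1)
  choose C hC using fun t : n × n =>
    hpow _ fun x hx => eval_segProd_genericSeq_eq_zero hzero hx t.1 t.2
  obtain ⟨B, hB⟩ := Finite.exists_le C
  refine ⟨K, hK, k, hk, B * 2 ^ Fintype.card n, fun M hM δ h0 h1 hspec p q => ?_⟩
  have hball : (fun t : Fin (K + 1) × n × n => M t.1 t.2.1 t.2.2) ∈ Metric.closedBall 0 1 :=
    mem_closedBall_zero_iff.mpr ((pi_norm_le_iff_of_nonneg zero_le_one).mpr fun t => hM _ _ _)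
  have hentry := hC (p, q) _ hball (2 ^ Fintype.card n * δ) (by positivity) <| by
    rintro _ ⟨a, m, l, hm, ham, hl, rfl⟩
    rw [eval_charpoly_coeff_segProd_genericSeq M ham]
    exact norm_charpoly_coeff_le h0 h1 (hspec a m hm ham) hl
  rw [show MvPolynomial.eval _ (segProd (genericSeq n K) 0 K p q) = segProd M 0 K p q from
    congrFun₂ (map_eval_segProd_genericSeq M (zero_add K).le) p q] at hentry
  rw [mul_assoc]
  exact hentry.trans (mul_le_mul_of_nonneg_right (hB (p, q)) (by positivity))

end GenericSequence

section OperatorNorm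

open scoped Matrix.Norms.L2Operator

variable {n : Type*} [Fintype n] [DecidableEq n]

lemma norm_apply_le_l2_opNorm (A : Matrix n n ℂ) (p q : n) : ‖A p q‖ ≤ ‖A‖ := by
  have hcol := A.l2_opNorm_mulVec (EuclideanSpace.single q 1)
  rw [PiLp.norm_single, norm_one, mul_one] at hcol
  refine le_trans ?_ ((PiLp.norm_apply_le _ p).trans hcol)
  simp

lemma exists_l2_opNorm_le_mul_norm_apply (n : Type*) [Fintype n] [DecidableEq n] [Nonempty n] :
    ∃ D : ℝ, 0 ≤ D ∧ ∀ A : Matrix n n ℂ, ∃ p q, ‖A‖ ≤ D * ‖A p q‖ := by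
  let ofEntries : (n → n → ℂ) →ₗ[ℂ] Matrix n n ℂ := (Matrix.ofLinearEquiv ℂ).toLinearMap
  refine ⟨‖ofEntries.toContinuousLinearMap‖, norm_nonneg _, fun A => ?_⟩
  obtain ⟨⟨p, q⟩, hmax⟩ := Finite.exists_max fun t : n × n => ‖A t.1 t.2‖
  refine ⟨p, q, (ofEntries.toContinuousLinearMap.le_opNorm A).trans ?_⟩
  refine mul_le_mul_of_nonneg_left ?_ (norm_nonneg _)
  exact (pi_norm_le_iff_of_nonneg (norm_nonneg _)).mpr fun i =>
    (pi_norm_le_iff_of_nonneg (norm_nonneg _)).mpr fun j => hmax (i, j)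

lemma toReal_spectralRadius_le_norm {𝕜 A : Type*} [NormedField 𝕜] [NormedRing A]
    [NormedAlgebra 𝕜 A] [CompleteSpace A] [NormOneClass A] (a : A) :
    (spectralRadius 𝕜 a).toReal ≤ ‖a‖ :=
  ENNReal.toReal_le_of_le_ofReal (norm_nonneg a) <| by
    simpa only [ofReal_norm, enorm_eq_nnnorm] using spectrum.spectralRadius_le_nnnorm a

lemma norm_le_toReal_spectralRadius {𝕜 A : Type*} [NormedField 𝕜] [NormedRing A]
    [NormedAlgebra 𝕜 A] [CompleteSpace A] [NormOneClass A] {a : A} {μ : 𝕜}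
    (hμ : μ ∈ spectrum 𝕜 a) : ‖μ‖ ≤ (spectralRadius 𝕜 a).toReal := by
  have hfin : spectralRadius 𝕜 a ≠ ⊤ :=
    ne_top_of_le_ne_top ENNReal.coe_ne_top (spectrum.spectralRadius_le_nnnorm a)
  simpa using ENNReal.toReal_mono hfin
    (le_iSup₂ (f := fun ν (_ : ν ∈ spectrum 𝕜 a) => (‖ν‖₊ : ENNReal)) μ hμ)

theorem exists_norm_segProd_pow_le (n : Type*) [Fintype n] [DecidableEq n] [Nonempty n] :
    ∃ K > 0, ∃ k ≠ 0, ∃ C : ℝ, ∀ (M : ℕ → Matrix n n ℂ) (α δ : ℝ), 0 < α → 0 ≤ δ → δ ≤ 1 →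
      (∀ i, ‖M i‖ ≤ α) →
      (∀ a m, 0 < m → a + m ≤ K → ∀ μ ∈ spectrum ℂ (segProd M a m), ‖μ‖ ≤ δ * α ^ m) →
      ‖segProd M 0 K‖ ^ k ≤ C * δ * (α ^ K) ^ k := by
  obtain ⟨K, hK, k, hk, C, hC⟩ := exists_norm_segProd_apply_pow_le n
  obtain ⟨D, hD, hentry⟩ := exists_l2_opNorm_le_mul_norm_apply n
  refine ⟨K, hK, k, hk, D ^ k * C, fun M α δ hα h0 h1 hM hspec => ?_⟩
  have hα' : ‖(α : ℂ)‖ = α := by simp [hα.le]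
  obtain ⟨N, rfl⟩ : ∃ N : ℕ → Matrix n n ℂ, M = fun i => (α : ℂ) • N i :=
    ⟨fun i => (α : ℂ)⁻¹ • M i, by ext1 i; rw [smul_inv_smul₀ (by exact_mod_cast hα.ne')]⟩
  simp only [segProd_smul] at hspec ⊢
  have hN (i : ℕ) : ‖N i‖ ≤ 1 := by
    have := hM i
    rwa [norm_smul, hα', mul_le_iff_le_one_right hα] at this
  have hspecN (a m : ℕ) (hm : 0 < m) (ham : a + m ≤ K) (μ : ℂ)
      (hμ : μ ∈ spectrum ℂ (segProd N a m)) : ‖μ‖ ≤ δ := by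
    have hunit : IsUnit ((α : ℂ) ^ m) := by simp [hα.ne']
    have := hspec a m hm ham _ ((spectrum.smul_mem_smul_iff (r := hunit.unit)).mpr hμ)
    rw [Units.smul_def, IsUnit.unit_spec, smul_eq_mul, norm_mul, norm_pow, hα', mul_comm] at this
    exact le_of_mul_le_mul_right this (by positivity)
  obtain ⟨p, q, hpq⟩ := hentry (segProd N 0 K)
  calc ‖(α : ℂ) ^ K • segProd N 0 K‖ ^ k = ‖segProd N 0 K‖ ^ k * (α ^ K) ^ k := by
        rw [norm_smul, norm_pow, hα', mul_pow, mul_comm]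
    _ ≤ (D * ‖segProd N 0 K p q‖) ^ k * (α ^ K) ^ k := by gcongr
    _ ≤ D ^ k * (C * δ) * (α ^ K) ^ k := by
        rw [mul_pow]
        gcongr
        exact hC N (fun i p q => (norm_apply_le_l2_opNorm _ p q).trans (hN i)) δ h0 h1 hspecN p q
    _ = D ^ k * C * δ * (α ^ K) ^ k := by ring

end OperatorNorm

section GrowthRate

lemma le_of_frequently_pow_le_mul_pow {a b C : ℝ} (hb : 0 ≤ b)
    (h : ∃ᶠ m : ℕ in atTop, a ^ m ≤ C * b ^ m) : a ≤ b := by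
  by_contra! hba
  have ha : 0 < a := hb.trans_lt hba
  have hlim : Tendsto (fun m : ℕ => C * (b / a) ^ m) atTop (𝓝 0) := by
    simpa using (tendsto_pow_atTop_nhds_zero_of_lt_one (by positivity)
      ((div_lt_one ha).mpr hba)).const_mul C
  obtain ⟨m, hm, hlt⟩ := (h.and_eventually (hlim.eventually_lt_const one_pos)).exists
  rw [div_pow, ← mul_div_assoc, div_lt_one (by positivity)] at hlt
  exact hm.not_gt hlt

variable {X : Type*}

/-- The exponential growth rate `limsup (sup_x F n x) ^ (1 / n)` of a family of functions. The joint
and the generalized spectral radius are the growth rates of the norms and of the spectral radii. -/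
noncomputable def growthRate (F : ℕ → X → ℝ) : ℝ :=
  limsup (fun n : ℕ => ⨆ x, F n x ^ (1 / (n : ℝ))) atTop

/-- `F` is nonnegative and grows at most like `c ^ n`. Requiring `1 ≤ c` also covers the index
`n = 0`, at which the exponent `1 / n` of `growthRate` is `0`. -/
structure ExpBounded (F : ℕ → X → ℝ) (c : ℝ) : Prop where
  one_le : 1 ≤ c
  nonneg : ∀ n x, 0 ≤ F n x
  le_pow : ∀ n x, F n x ≤ c ^ n

namespace ExpBounded

variable {F G : ℕ → X → ℝ} {c : ℝ}

lemma of_le (hG : ExpBounded G c) (hF : ∀ n x, 0 ≤ F n x) (h : ∀ n x, F n x ≤ G n x) :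
    ExpBounded F c :=
  ⟨hG.one_le, hF, fun n x => (h n x).trans (hG.le_pow n x)⟩

lemma root_le (hF : ExpBounded F c) (n : ℕ) (x : X) : F n x ^ (1 / (n : ℝ)) ≤ c := by
  rcases eq_or_ne n 0 with rfl | hn
  · simpa using hF.one_le
  · rw [one_div]
    exact (Real.rpow_le_rpow (hF.nonneg n x) (hF.le_pow n x) (by positivity)).trans_eq
      (Real.pow_rpow_inv_natCast (zero_le_one.trans hF.one_le) hn)

lemma bddAbove_root (hF : ExpBounded F c) (n : ℕ) :
    BddAbove (Set.range fun x => F n x ^ (1 / (n : ℝ))) :=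
  ⟨c, Set.forall_mem_range.mpr (hF.root_le n)⟩

lemma iSup_root_nonneg (hF : ExpBounded F c) (n : ℕ) : 0 ≤ ⨆ x, F n x ^ (1 / (n : ℝ)) :=
  Real.iSup_nonneg fun x => Real.rpow_nonneg (hF.nonneg n x) _

lemma isBoundedUnder_iSup_root (hF : ExpBounded F c) :
    IsBoundedUnder (· ≤ ·) atTop fun n : ℕ => ⨆ x, F n x ^ (1 / (n : ℝ)) :=
  isBoundedUnder_of ⟨c, fun n => Real.iSup_le (hF.root_le n) (zero_le_one.trans hF.one_le)⟩

lemma isCoboundedUnder_iSup_root (hF : ExpBounded F c) :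
    IsCoboundedUnder (· ≤ ·) atTop fun n : ℕ => ⨆ x, F n x ^ (1 / (n : ℝ)) :=
  (isBoundedUnder_of ⟨0, hF.iSup_root_nonneg⟩ : IsBoundedUnder (· ≥ ·) atTop _).isCoboundedUnder_le

lemma growthRate_nonneg (hF : ExpBounded F c) : 0 ≤ growthRate F :=
  le_limsup_of_frequently_le (Frequently.of_forall hF.iSup_root_nonneg) hF.isBoundedUnder_iSup_root

lemma growthRate_mono (hF : ExpBounded F c) (hG : ExpBounded G c) (h : ∀ n x, F n x ≤ G n x) :
    growthRate F ≤ growthRate G :=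
  limsup_le_limsup (Eventually.of_forall fun n => ciSup_mono (hG.bddAbove_root n) fun x =>
    Real.rpow_le_rpow (hF.nonneg n x) (h n x) (by positivity))
    hF.isCoboundedUnder_iSup_root hG.isBoundedUnder_iSup_root

lemma eventually_le_pow (hF : ExpBounded F c) {γ : ℝ} (hγ : growthRate F < γ) :
    ∀ᶠ n in atTop, ∀ x, F n x ≤ γ ^ n := by
  filter_upwards [eventually_lt_of_limsup_lt hγ hF.isBoundedUnder_iSup_root, eventually_ne_atTop 0]
    with n hn hn0 x
  have hroot : F n x ^ (1 / (n : ℝ)) ≤ γ := (le_ciSup (hF.bddAbove_root n) x).trans hn.le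
  have hpow := pow_le_pow_left₀ (Real.rpow_nonneg (hF.nonneg n x) _) hroot n
  rwa [one_div, Real.rpow_inv_natCast_pow (hF.nonneg n x) hn0] at hpow

lemma growthRate_le_of_le_mul_pow [Nonempty X] (hF : ExpBounded F c) {β C : ℝ} (hβ : 0 ≤ β)
    (h : ∀ n x, F n x ≤ C * β ^ n) : growthRate F ≤ β := by
  refine le_of_forall_lt_imp_le_of_dense fun a ha => ?_
  rcases lt_or_ge a 0 with ha0 | ha0
  · exact ha0.le.trans hβ
  refine le_of_frequently_pow_le_mul_pow hβ (C := C) ?_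
  have hfreq := frequently_lt_of_lt_limsup hF.isCoboundedUnder_iSup_root ha
  refine (hfreq.and_eventually (eventually_ne_atTop 0)).mono fun n ⟨hn, hn0⟩ => ?_
  obtain ⟨x, hx⟩ := exists_lt_of_lt_ciSup hn
  have hpow := pow_le_pow_left₀ ha0 hx.le n
  rw [one_div, Real.rpow_inv_natCast_pow (hF.nonneg n x) hn0] at hpow
  exact hpow.trans (h n x)

end ExpBounded

end GrowthRate

section Submultiplicative

variable {X : Type*} {F : ℕ → X → ℝ} {c : ℝ} {θ : X → X}

lemma le_pow_of_submultiplicative (hF : ExpBounded F c)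
    (hsub : ∀ m n x, F (m + n) x ≤ F n (θ^[m] x) * F m x) {q : ℕ} {b : ℝ} (hb : ∀ x, F q x ≤ b)
    (j : ℕ) (x : X) : F (j * q) x ≤ b ^ j := by
  induction j with
  | zero => simpa using hF.le_pow 0 x
  | succ j ih =>
    have hb0 : 0 ≤ b := (hF.nonneg q x).trans (hb x)
    rw [add_one_mul, pow_succ']
    exact (hsub _ _ x).trans (mul_le_mul (hb _) ih (hF.nonneg _ x) hb0)

lemma growthRate_le_of_submultiplicative [Nonempty X] (hF : ExpBounded F c)
    (hsub : ∀ m n x, F (m + n) x ≤ F n (θ^[m] x) * F m x) {q : ℕ} (hq : 0 < q) {β : ℝ}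
    (hβ : 0 ≤ β) (h : ∀ x, F q x ≤ β ^ q) : growthRate F ≤ β := by
  refine le_of_forall_gt_imp_ge_of_dense fun b hb => ?_
  have hb0 : 0 < b := hβ.trans_lt hb
  have hbq (x : X) : F q x ≤ b ^ q := (h x).trans (pow_le_pow_left₀ hβ hb.le q)
  refine hF.growthRate_le_of_le_mul_pow (C := max 1 (c / b) ^ q) hb0.le fun n x => ?_
  have hn : n / q * q + n % q = n := Nat.div_add_mod' n q
  calc F n x ≤ F (n % q) (θ^[n / q * q] x) * F (n / q * q) x := by
        simpa only [hn] using hsub (n / q * q) (n % q) x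
    _ ≤ c ^ (n % q) * (b ^ q) ^ (n / q) :=
        mul_le_mul (hF.le_pow _ _) (le_pow_of_submultiplicative hF hsub hbq _ x) (hF.nonneg _ x)
          (pow_nonneg (zero_le_one.trans hF.one_le) _)
    _ = (c / b) ^ (n % q) * b ^ n := by
        rw [div_pow, div_mul_eq_mul_div, eq_div_iff (by positivity), ← pow_mul, mul_comm q,
          mul_assoc, ← pow_add, hn]
    _ ≤ max 1 (c / b) ^ q * b ^ n := by
        have hcb : 0 ≤ c / b := div_nonneg (zero_le_one.trans hF.one_le) hb0.le
        gcongr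
        exact (pow_le_pow_left₀ hcb (le_max_right _ _) _).trans
          (pow_le_pow_right₀ (le_max_left _ _) (Nat.mod_lt n hq).le)

lemma growthRate_pow_le_of_submultiplicative [Nonempty X] (hF : ExpBounded F c)
    (hsub : ∀ m n x, F (m + n) x ≤ F n (θ^[m] x) * F m x) {q k : ℕ} (hq : 0 < q) (hk : k ≠ 0)
    {B : ℝ} (h : ∀ x, F q x ^ k ≤ B) : growthRate F ^ (q * k) ≤ B := by
  have hB : 0 ≤ B := (pow_nonneg (hF.nonneg q _) k).trans (h (Classical.arbitrary X))
  have hroot : (B ^ ((q * k : ℕ) : ℝ)⁻¹) ^ (q * k) = B :=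
    Real.rpow_inv_natCast_pow hB (mul_ne_zero hq.ne' hk)
  refine (pow_le_pow_left₀ hF.growthRate_nonneg ?_ _).trans_eq hroot
  refine growthRate_le_of_submultiplicative hF hsub hq (by positivity) fun x => ?_
  refine le_of_pow_le_pow_left₀ hk (by positivity) ?_
  rw [← pow_mul, hroot]
  exact h x

end Submultiplicative

section Cocycle

open scoped Matrix.Norms.L2Operator

variable {X R : Type*}

/-- The cocycle `A (θ^[m - 1] x) * ⋯ * A (θ x) * A x` generated by `A` over `θ`. -/
def cocycle [Monoid R] (θ : X → X) (A : X → R) (m : ℕ) (x : X) : R :=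
  segProd (fun i => A (θ^[i] x)) 0 m

lemma segProd_orbit [Monoid R] (θ : X → X) (A : X → R) (x : X) (a m : ℕ) :
    segProd (fun i => A (θ^[i] x)) a m = cocycle θ A m (θ^[a] x) := by
  simpa only [cocycle, ← Function.iterate_add_apply, add_comm, add_zero] using
    (segProd_shift (fun i => A (θ^[i] x)) a 0 m).symm

lemma cocycle_add [Monoid R] (θ : X → X) (A : X → R) (m l : ℕ) (x : X) :
    cocycle θ A (m + l) x = cocycle θ A l (θ^[m] x) * cocycle θ A m x := by
  rw [← segProd_orbit, cocycle, segProd_add, zero_add, cocycle]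

lemma expBounded_norm_cocycle [NormedRing R] [NormOneClass R] (θ : X → X) {A : X → R} {c : ℝ}
    (hc : 1 ≤ c) (hA : ∀ x, ‖A x‖ ≤ c) : ExpBounded (fun m x => ‖cocycle θ A m x‖) c where
  one_le := hc
  nonneg _ _ := norm_nonneg _
  le_pow m x := by
    induction m with
    | zero => simp [cocycle, segProd]
    | succ m ih =>
      rw [pow_succ']
      exact norm_mul_le_of_le (hA _) ih

variable {n : Type*} [Fintype n] [DecidableEq n] [Nonempty n]

lemma exists_norm_cocycle_pow_le (θ : X → X) (A : X → Matrix n n ℂ) :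
    ∃ K > 0, ∃ k ≠ 0, ∃ C : ℝ, ∀ (m : ℕ) (α γ : ℝ), 0 < α → 0 ≤ γ → γ ≤ α →
      (∀ x, ‖cocycle θ A m x‖ ≤ α ^ m) →
      (∀ l ≥ m, ∀ x, (spectralRadius ℂ (cocycle θ A l x)).toReal ≤ γ ^ l) →
      ∀ x, ‖cocycle θ A (K * m) x‖ ^ k ≤ C * (γ / α) ^ m * ((α ^ m) ^ K) ^ k := by
  obtain ⟨K, hK, k, hk, C, hC⟩ := exists_norm_segProd_pow_le n
  refine ⟨K, hK, k, hk, C, fun m α γ hα hγ hγα hnorm hrad x => ?_⟩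
  have hratio : γ / α ≤ 1 := (div_le_one hα).mpr hγα
  let block (i : ℕ) : Matrix n n ℂ := segProd (fun j => A (θ^[j] x)) (i * m) m
  have hsegProd (a l : ℕ) : segProd block a l = cocycle θ A (l * m) (θ^[a * m] x) :=
    (segProd_blocks _ m a l).trans (segProd_orbit θ A x _ _)
  have hblock (i : ℕ) : ‖block i‖ ≤ α ^ m := by
    simpa only [block, segProd_orbit] using hnorm (θ^[i * m] x)
  have hspec (a l : ℕ) (hl : 0 < l) (_ : a + l ≤ K) (μ : ℂ)
      (hμ : μ ∈ spectrum ℂ (segProd block a l)) : ‖μ‖ ≤ (γ / α) ^ m * (α ^ m) ^ l := by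
    rw [hsegProd] at hμ
    have hml : m ≤ l * m := Nat.le_mul_of_pos_left m hl
    calc ‖μ‖ ≤ γ ^ (l * m) := (norm_le_toReal_spectralRadius hμ).trans (hrad _ hml _)
      _ = (γ / α) ^ (l * m) * (α ^ m) ^ l := by
          rw [← pow_mul, mul_comm m l, ← mul_pow, div_mul_cancel₀ _ hα.ne']
      _ ≤ (γ / α) ^ m * (α ^ m) ^ l := by
          gcongr ?_ * _
          exact pow_le_pow_of_le_one (by positivity) hratio hml
  simpa only [hsegProd, zero_mul, Function.iterate_zero_apply] using
    hC block (α ^ m) ((γ / α) ^ m) (by positivity) (by positivity)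
      (pow_le_one₀ (by positivity) hratio) hblock hspec

lemma expBounded_spectralRadius_cocycle (θ : X → X) {A : X → Matrix n n ℂ} {c : ℝ} (hc : 1 ≤ c)
    (hA : ∀ x, ‖A x‖ ≤ c) :
    ExpBounded (fun m x => (spectralRadius ℂ (cocycle θ A m x)).toReal) c :=
  (expBounded_norm_cocycle θ hc hA).of_le (fun _ _ => ENNReal.toReal_nonneg)
    fun _ _ => toReal_spectralRadius_le_norm _

lemma exists_growthRate_cocycle_pow_mul_le [Nonempty X] (θ : X → X) {A : X → Matrix n n ℂ} {c : ℝ}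
    (hc : 1 ≤ c) (hA : ∀ x, ‖A x‖ ≤ c) :
    ∃ N : ℕ, ∀ γ α : ℝ,
      growthRate (fun m x => (spectralRadius ℂ (cocycle θ A m x)).toReal) < γ →
      growthRate (fun m x => ‖cocycle θ A m x‖) < α → γ ≤ α →
      growthRate (fun m x => ‖cocycle θ A m x‖) ^ N * α ≤ γ * α ^ N := by
  have hbdd := expBounded_norm_cocycle θ hc hA
  have hbddRad := expBounded_spectralRadius_cocycle θ hc hA
  obtain ⟨K, hK, k, hk, C, hC⟩ := exists_norm_cocycle_pow_le θ A
  refine ⟨K * k, fun γ α hγ hα hγα => ?_⟩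
  have hγ0 : 0 ≤ γ := hbddRad.growthRate_nonneg.trans hγ.le
  have hα0 : 0 < α := hbdd.growthRate_nonneg.trans_lt hα
  have hsub (m l : ℕ) (x : X) :
      ‖cocycle θ A (m + l) x‖ ≤ ‖cocycle θ A l (θ^[m] x)‖ * ‖cocycle θ A m x‖ := by
    rw [cocycle_add]
    exact norm_mul_le _ _
  refine le_of_frequently_pow_le_mul_pow (C := C) (by positivity) (Eventually.frequently ?_)
  filter_upwards [hbdd.eventually_le_pow hα, eventually_forall_ge_atTop.mpr
    (hbddRad.eventually_le_pow hγ), eventually_gt_atTop 0] with m hnorm hrad hm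
  have hrate := growthRate_pow_le_of_submultiplicative hbdd hsub (Nat.mul_pos hK hm) hk
    (hC m α γ hα0 hγ0 hγα hnorm hrad)
  calc _ = growthRate (fun m x => ‖cocycle θ A m x‖) ^ (K * m * k) * α ^ m := by
        rw [mul_pow, ← pow_mul, mul_right_comm K]
    _ ≤ C * (γ / α) ^ m * ((α ^ m) ^ K) ^ k * α ^ m := by gcongr
    _ = C * (γ * α ^ (K * k)) ^ m := by
        rw [div_pow, mul_pow, ← pow_mul, ← pow_mul, ← pow_mul, mul_comm (K * k) m, ← mul_assoc m]
        field_simp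

theorem growthRate_spectralRadius_cocycle_eq [Nonempty X] (θ : X → X) {A : X → Matrix n n ℂ}
    (hA : BddAbove (Set.range fun x => ‖A x‖)) :
    growthRate (fun m x => (spectralRadius ℂ (cocycle θ A m x)).toReal) =
      growthRate (fun m x => ‖cocycle θ A m x‖) := by
  obtain ⟨c, hc, hA⟩ : ∃ c : ℝ, 1 ≤ c ∧ ∀ x, ‖A x‖ ≤ c := by
    obtain ⟨b, hb⟩ := hA
    exact ⟨max 1 b, le_max_left _ _, fun x => (hb ⟨x, rfl⟩).trans (le_max_right _ _)⟩
  have hbdd := expBounded_norm_cocycle θ hc hA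
  have hbddRad := expBounded_spectralRadius_cocycle θ hc hA
  refine (hbddRad.growthRate_mono hbdd fun _ _ => toReal_spectralRadius_le_norm _).antisymm ?_
  set J := growthRate (fun m x => ‖cocycle θ A m x‖)
  refine le_of_forall_gt_imp_ge_of_dense fun γ hγ => ?_
  by_contra! hγJ
  obtain ⟨N, hN⟩ := exists_growthRate_cocycle_pow_mul_le θ hc hA
  have hJ : 0 < J := (hbddRad.growthRate_nonneg.trans_lt hγ).trans hγJ
  have hlim : J ^ N * J ≤ γ * J ^ N := by
    have hcontL : Tendsto (fun α => J ^ N * α) (𝓝[>] J) (𝓝 (J ^ N * J)) :=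
      tendsto_nhdsWithin_of_tendsto_nhds (Continuous.tendsto (by fun_prop) J)
    have hcontR : Tendsto (fun α => γ * α ^ N) (𝓝[>] J) (𝓝 (γ * J ^ N)) :=
      tendsto_nhdsWithin_of_tendsto_nhds (Continuous.tendsto (by fun_prop) J)
    refine le_of_tendsto_of_tendsto hcontL hcontR ?_
    filter_upwards [self_mem_nhdsWithin] with α hα using hN γ α hγ hα (hγJ.trans hα).le
  rw [mul_comm] at hlim
  exact hγJ.not_ge (le_of_mul_le_mul_right hlim (by positivity))

end Cocycle

section SwitchingSignals

variable {d : ℕ} {I : Type*} (S : I → Matrix (Fin d) (Fin d) ℂ) {Λ : Set (ℕ → I)}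

/-- The one-sided shift, as a self-map of a shift-invariant set of signals. -/
def shiftOn (hinv : ShiftInv Λ) (x : Λ) : Λ :=
  ⟨fun i => x.1 (i + 1), hinv x.1 x.2⟩

lemma shiftOn_iterate_apply (hinv : ShiftInv Λ) (m : ℕ) (x : Λ) (i : ℕ) :
    ((shiftOn hinv)^[m] x).1 i = x.1 (i + m) := by
  induction m generalizing x with
  | zero => rfl
  | succ m ih => exact (ih (shiftOn hinv x)).trans (congrArg x.1 (by omega))

lemma prodS_eq_cocycle (hinv : ShiftInv Λ) (m : ℕ) (x : Λ) :
    prodS S x.1 m = cocycle (shiftOn hinv) (fun y : Λ => S (y.1 0)) m x := by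
  induction m with
  | zero => rfl
  | succ m ih =>
    rw [prodS, ih, cocycle, cocycle, segProd, shiftOn_iterate_apply, zero_add, zero_add]

open scoped Matrix.Norms.L2Operator in
lemma continuous_opNorm : Continuous (opNorm (d := d)) :=
  continuous_norm

end SwitchingSignals

theorem gsr_eq_jsr_general {d : ℕ} (hd : 1 ≤ d) {I : Type*}
    (S : I → Matrix (Fin d) (Fin d) ℂ) (Λ : Set (ℕ → I)) (hne : Λ.Nonempty)
    (hbdd : BddAbove ((fun x => opNorm (S (x 0))) '' Λ)) (hinv : ShiftInv Λ) :
    gsr S Λ = jsr S Λ := by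
  have : Nonempty (Fin d) := ⟨⟨0, hd⟩⟩
  have : Nonempty Λ := hne.to_subtype
  rw [Set.image_eq_range] at hbdd
  have hrates := growthRate_spectralRadius_cocycle_eq (shiftOn hinv) hbdd
  simp only [← prodS_eq_cocycle] at hrates
  exact hrates

/-- **Theorem A (Gel'fand-type spectral radius formula with constraints).** -/
theorem gsr_eq_jsr {d : ℕ} (hd : 1 ≤ d) {I : Type*} [MetricSpace I]
    (S : I → Matrix (Fin d) (Fin d) ℂ) (hS : Continuous S)
    (Λ : Set (ℕ → I)) (hne : Λ.Nonempty) (hcomp : IsCompact Λ) (hinv : ShiftInv Λ) :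
    gsr S Λ = jsr S Λ :=
  gsr_eq_jsr_general hd S Λ hne
    (hcomp.bddAbove_image (continuous_opNorm.comp (hS.comp (continuous_apply 0))).continuousOn)
    hinv
end

section
/- Let Ω be a nonempty compact metrizable topological space, T : Ω → Ω continuous, and ⟨f_n⟩_{n≥1} a T-subadditive sequence of continuous real-valued functions on Ω, and set χ = lim_{n→∞} (1/n) sup_{ω∈Ω} f_n(ω). Then there exists a T-ergodic Borel probability measure μ* on Ω such that χ = inf_{ℓ≥1} (1/ℓ) ∫_Ω f_ℓ dμ*, and moreover χ = limsup_{n→∞} (1/n) f_n(ω) for μ*-almost every ω ∈ Ω. -/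
open Filter Topology MeasureTheory

/-!
Call an invariant probability measure `μ` maximizing if `n * χ ≤ ∫ f n ∂μ` for every `n`. Maximizing
measures exist: take a weak limit of the uniform measures on orbit segments of length `n` starting
at a maximum point of `f n`, and compare `l * f n` with the Birkhoff sum of `f l` by telescoping
`f (k + l) - f k ≤ f l ∘ T^[k]` over `k`. By Fekete's lemma the growth rate `lim (∫ f n ∂μ) / n` of
an invariant measure `μ` is also the infimum of these quotients; it never exceeds `χ` and is affine
in `μ`, so the maximizing measures form a closed face of the set of invariant probability
measures. An extreme point of this face, given by Krein–Milman, is extreme among all invariant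
probability measures, hence ergodic. For a maximizing measure `f n / n` converges to `χ` in `L¹`,
and therefore almost everywhere along a subsequence, while `f n / n ≤ (sup f n) / n` everywhere.
-/

open scoped ENNReal

theorem mul_le_of_subadditive_of_tendsto {u v : ℕ → ℝ} {c : ℝ} (hu : Subadditive u)
    (hv : Tendsto v atTop (𝓝 c)) (hvu : ∀ᶠ n in atTop, v n ≤ u n / n) (n : ℕ) :
    n * c ≤ u n := by
  obtain rfl | hn := eq_or_ne n 0
  · simpa using hu 0 0
  have hbdd : BddBelow (Set.range fun n : ℕ => u n / n) :=
    (hv.isBoundedUnder_ge.mono_ge hvu).bddBelow_range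
  have hc : c ≤ u n / n :=
    (le_of_tendsto_of_tendsto hv (hu.tendsto_lim hbdd) hvu).trans (hu.lim_le_div hbdd hn)
  rwa [le_div_iff₀' (by positivity)] at hc

section IsSubadditiveOver

variable {Ω : Type*} {T : Ω → Ω} {f : ℕ → Ω → ℝ}

/-- The sequence of functions `f` is `T`-subadditive. As in `Subadditive`, the indices are allowed
to vanish, which forces `0 ≤ f 0`; a sequence indexed by `n ≥ 1` is extended by `f 0 = 0`. -/
def IsSubadditiveOver (T : Ω → Ω) (f : ℕ → Ω → ℝ) : Prop :=
  ∀ m n ω, f (m + n) ω ≤ f n (T^[m] ω) + f m ω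

namespace IsSubadditiveOver

theorem update_zero
    (hf : ∀ m n : ℕ, 1 ≤ m → 1 ≤ n → ∀ ω, f (m + n) ω ≤ f n (T^[m] ω) + f m ω) :
    IsSubadditiveOver T (Function.update f 0 0) := by
  intro m n ω
  obtain rfl | hm := Nat.eq_zero_or_pos m
  · simp
  obtain rfl | hn := Nat.eq_zero_or_pos n
  · simp
  have hmn : m + n ≠ 0 := by omega
  simpa [hm.ne', hn.ne', hmn] using hf m n hm hn ω

theorem sum_range_apply_add_le (hf : IsSubadditiveOver T f) (l n : ℕ) (x : Ω) :
    ∑ j ∈ Finset.range l, f (n + j) x ≤ ∑ j ∈ Finset.range l, f j x + birkhoffSum T (f l) n x := by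
  induction n with
  | zero => simp
  | succ n ih =>
    have hshift : ∑ j ∈ Finset.range l, f (n + 1 + j) x + f n x =
        ∑ j ∈ Finset.range l, f (n + j) x + f (n + l) x := by
      rw [← Finset.sum_range_succ (fun j => f (n + j) x), Finset.sum_range_succ']
      simp only [add_zero, add_assoc, add_comm 1]
    rw [birkhoffSum_succ]
    linarith [hf n l x]

theorem mul_apply_add_le (hf : IsSubadditiveOver T f) (l n : ℕ) (x : Ω) :
    l * f (n + l) x ≤
      ∑ j ∈ Finset.range l, f (n + j) x + ∑ j ∈ Finset.range l, f (l - j) (T^[n + j] x) := by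
  rw [← Finset.sum_add_distrib, ← nsmul_eq_mul, ← Finset.card_range l, ← Finset.sum_const,
    Finset.card_range]
  refine Finset.sum_le_sum fun j hj => ?_
  have hsplit : n + j + (l - j) = n + l := by grind
  linarith [hsplit ▸ hf (n + j) (l - j) x]

theorem mul_le_birkhoffSum_add (hf : IsSubadditiveOver T f) {l n : ℕ} (hln : l ≤ n) {B : ℝ}
    (hB : ∀ j ≤ l, ∀ y, |f j y| ≤ B) (x : Ω) :
    l * f n x ≤ birkhoffSum T (f l) n x + 3 * (l * B) := by
  obtain ⟨k, rfl⟩ := Nat.exists_eq_add_of_le' hln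
  have sum_le {g : ℕ → ℝ} (hg : ∀ j < l, g j ≤ B) : ∑ j ∈ Finset.range l, g j ≤ l * B := by
    simpa using Finset.sum_le_card_nsmul (Finset.range l) g B (by simpa using hg)
  have hhead : ∑ j ∈ Finset.range l, f j x ≤ l * B :=
    sum_le fun j hj => (abs_le.1 (hB j hj.le x)).2
  have htail : ∑ j ∈ Finset.range l, f (l - j) (T^[k + j] x) ≤ l * B :=
    sum_le fun j _ => (abs_le.1 (hB (l - j) (Nat.sub_le l j) _)).2
  have hrest : -birkhoffSum T (f l) l (T^[k] x) ≤ l * B := by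
    rw [← birkhoffSum_neg]
    exact sum_le fun j _ => neg_le.1 (abs_le.1 (hB l le_rfl _)).1
  rw [birkhoffSum_add]
  linarith [hf.mul_apply_add_le l k x, hf.sum_range_apply_add_le l k x]

theorem subadditive_integral [MeasurableSpace Ω] {μ : Measure Ω} (hf : IsSubadditiveOver T f)
    (hT : MeasurePreserving T μ μ) (hint : ∀ n, Integrable (f n) μ) :
    Subadditive fun n => ∫ ω, f n ω ∂μ := by
  intro m n
  have hTm : MeasurePreserving T^[m] μ μ := hT.iterate m
  have hcomp_int : Integrable (fun ω => f n (T^[m] ω)) μ :=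
    hTm.integrable_comp_of_integrable (hint n)
  have hcomp : ∫ ω, f n (T^[m] ω) ∂μ = ∫ ω, f n ω ∂μ := by
    rw [← integral_map hTm.aemeasurable (hTm.map_eq.symm ▸ (hint n).1), hTm.map_eq]
  calc ∫ ω, f (m + n) ω ∂μ
      ≤ ∫ ω, (f n (T^[m] ω) + f m ω) ∂μ :=
        integral_mono (hint _) (hcomp_int.add (hint m)) (hf m n)
    _ = ∫ ω, f m ω ∂μ + ∫ ω, f n ω ∂μ := by
        rw [integral_add hcomp_int (hint m), hcomp, add_comm]

end IsSubadditiveOver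

end IsSubadditiveOver

section OrbitMeasure

variable {Ω : Type*} [MeasurableSpace Ω]

/-- The uniform probability measure on the orbit segment `x, T x, …, T^[n] x`, which has `n + 1`
points counted with multiplicity. -/
noncomputable def orbitMeasure (T : Ω → Ω) (n : ℕ) (x : Ω) : Measure Ω :=
  ((n + 1 : ℕ) : ℝ≥0∞)⁻¹ • ∑ i ∈ Finset.range (n + 1), Measure.dirac (T^[i] x)

instance isProbabilityMeasure_orbitMeasure (T : Ω → Ω) (n : ℕ) (x : Ω) :
    IsProbabilityMeasure (orbitMeasure T n x) where
  measure_univ := by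
    simpa [orbitMeasure] using
      ENNReal.inv_mul_cancel (a := (n + 1 : ℕ)) (by simp) (ENNReal.natCast_ne_top _)

theorem integral_orbitMeasure [MeasurableSingletonClass Ω] (T : Ω → Ω) (n : ℕ) (x : Ω)
    (g : Ω → ℝ) : ∫ ω, g ω ∂orbitMeasure T n x = birkhoffAverage ℝ T g (n + 1) x := by
  rw [orbitMeasure, integral_smul_measure,
    integral_finsetSum_measure fun _ _ => integrable_dirac enorm_lt_top]
  simp only [integral_dirac, ENNReal.toReal_inv, ENNReal.toReal_natCast, birkhoffAverage,
    birkhoffSum]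

end OrbitMeasure

theorem exists_integral_eq_add_of_mem_openSegment {Ω : Type*} [MeasurableSpace Ω]
    {μ ν₁ ν₂ : Measure Ω} (hμ : μ ∈ openSegment ℝ≥0∞ ν₁ ν₂) :
    ∃ a b : ℝ, 0 < a ∧ 0 < b ∧ a + b = 1 ∧ ∀ g : Ω → ℝ, Integrable g ν₁ → Integrable g ν₂ →
      a * ∫ ω, g ω ∂ν₁ + b * ∫ ω, g ω ∂ν₂ = ∫ ω, g ω ∂μ := by
  obtain ⟨a, b, ha, hb, hab, rfl⟩ := hμ
  obtain ⟨ha_top, hb_top⟩ : a ≠ ∞ ∧ b ≠ ∞ := ENNReal.add_ne_top.1 (hab ▸ ENNReal.one_ne_top)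
  refine ⟨a.toReal, b.toReal, ENNReal.toReal_pos ha.ne' ha_top, ENNReal.toReal_pos hb.ne' hb_top,
    by rw [← ENNReal.toReal_add ha_top hb_top, hab, ENNReal.toReal_one], fun g hg₁ hg₂ => ?_⟩
  rw [integral_add_measure (hg₁.smul_measure ha_top) (hg₂.smul_measure hb_top),
    integral_smul_measure, integral_smul_measure, smul_eq_mul, smul_eq_mul]

theorem ae_limsup_eq_of_ae_le_of_tendsto_integral {Ω : Type*} [MeasurableSpace Ω] {μ : Measure Ω}
    [IsProbabilityMeasure μ] {g : ℕ → Ω → ℝ} {s : ℕ → ℝ} {c : ℝ} (hint : ∀ n, Integrable (g n) μ)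
    (hle : ∀ n, ∀ᵐ ω ∂μ, g n ω ≤ s n) (hs : Tendsto s atTop (𝓝 c))
    (hg : Tendsto (fun n => ∫ ω, g n ω ∂μ) atTop (𝓝 c)) :
    ∀ᵐ ω ∂μ, limsup (fun n => (g n ω : EReal)) atTop = c := by
  have hsg_int (n : ℕ) : Integrable (fun ω => s n - g n ω) μ := (integrable_const _).sub (hint n)
  have hgap (n : ℕ) :
      eLpNorm (fun ω => s n - g n ω) 1 μ = ENNReal.ofReal (s n - ∫ ω, g n ω ∂μ) := by
    have hnonneg : 0 ≤ᵐ[μ] fun ω => s n - g n ω := (hle n).mono fun ω => sub_nonneg.2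
    rw [eLpNorm_one_eq_lintegral_enorm, lintegral_enorm_of_ae_nonneg hnonneg,
      ← ofReal_integral_eq_lintegral_ofReal (hsg_int n) hnonneg,
      integral_sub (integrable_const _) (hint n), integral_const, probReal_univ, one_smul]
  have hL1 : Tendsto (fun n => eLpNorm ((fun ω => s n - g n ω) - fun _ => 0) 1 μ) atTop (𝓝 0) := by
    have hgap_lim := ENNReal.tendsto_ofReal (hs.sub hg)
    rw [sub_self, ENNReal.ofReal_zero] at hgap_lim
    exact hgap_lim.congr fun n => by rw [← hgap, ← Pi.zero_def, sub_zero]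
  obtain ⟨φ, hφ, hφ_lim⟩ := (tendstoInMeasure_of_tendsto_eLpNorm one_ne_zero
    (fun n => (hsg_int n).1) aestronglyMeasurable_const hL1).exists_seq_tendsto_ae
  filter_upwards [hφ_lim, ae_all_iff.2 hle] with ω hω hω_le
  have hs_coe : Tendsto (fun n => (s n : EReal)) atTop (𝓝 c) := EReal.tendsto_coe.2 hs
  have hsub : Tendsto (fun i => (g (φ i) ω : EReal)) atTop (𝓝 c) :=
    EReal.tendsto_coe.2 (by simpa using (hs.comp hφ.tendsto_atTop).sub hω)
  apply le_antisymm
  · rw [← hs_coe.limsup_eq]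
    exact limsup_le_limsup (Eventually.of_forall fun n => EReal.coe_le_coe (hω_le n))
  · rw [← hsub.limsup_eq]
    exact hφ.tendsto_atTop.limsup_comp_le_limsup (u := fun n => (g n ω : EReal))

section HasOuterApproxClosed

variable {Ω : Type*} [TopologicalSpace Ω] [MeasurableSpace Ω] [BorelSpace Ω]
  [HasOuterApproxClosed Ω]

theorem measurePreserving_of_forall_integral_comp_eq {T : Ω → Ω} (hT : Continuous T)
    {μ : Measure Ω} [IsFiniteMeasure μ]
    (h : ∀ g : Ω → ℝ, Continuous g → ∫ ω, g (T ω) ∂μ = ∫ ω, g ω ∂μ) :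
    MeasurePreserving T μ μ := by
  refine ⟨hT.measurable, ext_of_forall_integral_eq_of_IsFiniteMeasure fun g => ?_⟩
  rw [integral_map hT.aemeasurable g.continuous.aestronglyMeasurable]
  exact h g g.continuous

theorem isClosed_setOf_measurePreserving {T : Ω → Ω} (hT : Continuous T) :
    IsClosed {μ : ProbabilityMeasure Ω | MeasurePreserving T (μ : Measure Ω) μ} := by
  have hiff (μ : ProbabilityMeasure Ω) : MeasurePreserving T (μ : Measure Ω) μ ↔
      μ.map hT.aemeasurable = μ :=
    ⟨fun h => Subtype.ext h.map_eq, fun h => ⟨hT.measurable, congrArg Subtype.val h⟩⟩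
  simpa only [hiff] using isClosed_eq (ProbabilityMeasure.continuous_map hT) continuous_id'

end HasOuterApproxClosed

section CompactSpace

variable {Ω : Type*} [TopologicalSpace Ω] [CompactSpace Ω]

theorem le_ciSup_of_continuous {g : Ω → ℝ} (hg : Continuous g) (ω : Ω) : g ω ≤ ⨆ ω, g ω :=
  le_ciSup (isCompact_range hg).bddAbove ω

theorem exists_forall_abs_le_of_continuous {f : ℕ → Ω → ℝ} (hf : ∀ n, Continuous (f n)) (l : ℕ) :
    ∃ B, ∀ j ≤ l, ∀ ω, |f j ω| ≤ B := by
  have hcont : Continuous fun ω => fun j : Fin (l + 1) => f j ω := continuous_pi fun j => hf j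
  obtain ⟨B, hB⟩ := isCompact_univ.exists_bound_of_continuousOn hcont.continuousOn
  exact ⟨B, fun j hj ω => (norm_le_pi_norm (fun j : Fin (l + 1) => f j ω)
    ⟨j, Nat.lt_succ_of_le hj⟩).trans (hB ω trivial)⟩

theorem tendsto_birkhoffAverage_comp_sub_birkhoffAverage {g : Ω → ℝ} (hg : Continuous g)
    (T : Ω → Ω) (x : ℕ → Ω) :
    Tendsto (fun n => birkhoffAverage ℝ T (g ∘ T) n (x n) - birkhoffAverage ℝ T g n (x n)) atTop
      (𝓝 0) := by
  obtain ⟨C, hC⟩ := Metric.isBounded_range_iff.1 (isCompact_range hg).isBounded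
  refine squeeze_zero_norm (fun n => ?_) (tendsto_const_div_atTop_nhds_zero_nat C)
  have hcomp : birkhoffAverage ℝ T (g ∘ T) n (x n) = birkhoffAverage ℝ T g n (T (x n)) := by
    simp only [birkhoffAverage, birkhoffSum, Function.comp_apply, ← Function.iterate_succ_apply,
      Function.iterate_succ_apply']
  rw [hcomp, ← dist_eq_norm, dist_birkhoffAverage_apply_birkhoffAverage]
  gcongr
  exact hC _ _

variable [MeasurableSpace Ω] [BorelSpace Ω]

theorem integrable_of_continuous {μ : Measure Ω} [IsFiniteMeasure μ] {g : Ω → ℝ}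
    (hg : Continuous g) : Integrable g μ :=
  hg.integrable_of_hasCompactSupport (HasCompactSupport.of_compactSpace g)

theorem integral_le_ciSup_of_continuous (μ : Measure Ω) [IsProbabilityMeasure μ] {g : Ω → ℝ}
    (hg : Continuous g) : ∫ ω, g ω ∂μ ≤ ⨆ ω, g ω := by
  simpa using integral_mono (μ := μ) (integrable_of_continuous hg) (integrable_const _)
    (le_ciSup_of_continuous hg)

theorem continuous_integral_probabilityMeasure {g : Ω → ℝ} (hg : Continuous g) :
    Continuous fun μ : ProbabilityMeasure Ω => ∫ ω, g ω ∂(μ : Measure Ω) :=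
  ProbabilityMeasure.continuous_integral_continuousMap (⟨g, hg⟩ : C(Ω, ℝ))

variable [HasOuterApproxClosed Ω]

/-- An extreme point of the image of `S` in the locally convex space `C(Ω, ℝ) → ℝ`, into which
measures embed through their integrals, is provided by the Krein–Milman theorem. -/
theorem extremePoints_nonempty_of_isCompact_preimage {S : Set (Measure Ω)}
    (hS_prob : ∀ μ ∈ S, IsProbabilityMeasure μ)
    (hS_compact : IsCompact ((↑) ⁻¹' S : Set (ProbabilityMeasure Ω))) (hS : S.Nonempty) :
    (S.extremePoints ℝ≥0∞).Nonempty := by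
  let Φ : ProbabilityMeasure Ω → C(Ω, ℝ) → ℝ := fun μ g => ∫ ω, g ω ∂(μ : Measure Ω)
  have hΦ : Continuous Φ :=
    continuous_pi fun g => continuous_integral_probabilityMeasure g.continuous
  obtain ⟨μ₀, hμ₀⟩ := hS
  have hne : ((↑) ⁻¹' S : Set (ProbabilityMeasure Ω)).Nonempty := ⟨⟨μ₀, hS_prob μ₀ hμ₀⟩, hμ₀⟩
  obtain ⟨-, ⟨μ, hμ, rfl⟩, hμ_ext⟩ := (hS_compact.image hΦ).extremePoints_nonempty (hne.image Φ)
  refine ⟨μ, hμ, fun ν₁ hν₁ ν₂ hν₂ hseg => ?_⟩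
  have := hS_prob ν₁ hν₁
  have := hS_prob ν₂ hν₂
  obtain ⟨a, b, ha, hb, hab, hint⟩ := exists_integral_eq_add_of_mem_openSegment hseg
  have hΦ_eq : Φ ⟨ν₁, ‹_›⟩ = Φ μ := by
    refine hμ_ext ⟨_, hν₁, rfl⟩ ⟨⟨ν₂, ‹_›⟩, hν₂, rfl⟩ ⟨a, b, ha, hb, hab, funext fun g => ?_⟩
    exact hint g (integrable_of_continuous g.continuous) (integrable_of_continuous g.continuous)
  exact ext_of_forall_integral_eq_of_IsFiniteMeasure fun g => congrFun hΦ_eq (g : C(Ω, ℝ))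

variable [T2Space Ω]

theorem exists_measurePreserving_tendsto_birkhoffAverage {T : Ω → Ω} (hT : Continuous T)
    (x : ℕ → Ω) {𝒰 : Ultrafilter ℕ} (h𝒰 : (𝒰 : Filter ℕ) ≤ atTop) :
    ∃ μ : Measure Ω, IsProbabilityMeasure μ ∧ MeasurePreserving T μ μ ∧
      ∀ g : Ω → ℝ, Continuous g →
        Tendsto (fun n => birkhoffAverage ℝ T g (n + 1) (x (n + 1))) 𝒰 (𝓝 (∫ ω, g ω ∂μ)) := by
  let ν : ℕ → ProbabilityMeasure Ω := fun n => ⟨orbitMeasure T n (x (n + 1)), inferInstance⟩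
  obtain ⟨μ, -, hμ⟩ := isCompact_univ.ultrafilter_le_nhds (𝒰.map ν) (by simp)
  have hlim (g : Ω → ℝ) (hg : Continuous g) :
      Tendsto (fun n => birkhoffAverage ℝ T g (n + 1) (x (n + 1))) 𝒰
        (𝓝 (∫ ω, g ω ∂(μ : Measure Ω))) :=
    (((continuous_integral_probabilityMeasure hg).tendsto μ).comp hμ).congr fun n =>
      integral_orbitMeasure T n (x (n + 1)) g
  refine ⟨μ, inferInstance, ?_, hlim⟩
  refine measurePreserving_of_forall_integral_comp_eq hT fun g hg => ?_
  have hzero := ((tendsto_birkhoffAverage_comp_sub_birkhoffAverage hg T x).comp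
    (tendsto_add_atTop_nat 1)).mono_left h𝒰
  exact sub_eq_zero.1 (tendsto_nhds_unique ((hlim _ (hg.comp hT)).sub (hlim g hg)) hzero)

end CompactSpace

section MaximizingMeasures

variable {Ω : Type*} [MeasurableSpace Ω] {T : Ω → Ω} {f : ℕ → Ω → ℝ} {χ : ℝ}

/-- The `T`-invariant probability measures whose integrals of `f n` grow at least at the rate `χ`.
When `χ` is the growth rate of the suprema of the `f n`, no larger rate is possible. -/
def maximizingMeasures (T : Ω → Ω) (f : ℕ → Ω → ℝ) (χ : ℝ) :
    Set (Measure Ω) :=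
  {μ | (MeasurePreserving T μ μ ∧ IsProbabilityMeasure μ) ∧ ∀ n : ℕ, n * χ ≤ ∫ ω, f n ω ∂μ}

theorem le_integral_div_of_mem_maximizingMeasures {μ : Measure Ω}
    (hμ : μ ∈ maximizingMeasures T f χ) {n : ℕ} (hn : n ≠ 0) : χ ≤ (∫ ω, f n ω ∂μ) / n := by
  rw [le_div_iff₀' (by positivity)]
  exact hμ.2 n

variable [TopologicalSpace Ω] [CompactSpace Ω] [BorelSpace Ω]

theorem tendsto_integral_div_of_mem_maximizingMeasures (hcont : ∀ n, Continuous (f n))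
    (hχ : Tendsto (fun n : ℕ => (⨆ ω, f n ω) / n) atTop (𝓝 χ)) {μ : Measure Ω}
    (hμ : μ ∈ maximizingMeasures T f χ) :
    Tendsto (fun n : ℕ => (∫ ω, f n ω ∂μ) / n) atTop (𝓝 χ) := by
  have := hμ.1.2
  refine tendsto_of_tendsto_of_tendsto_of_le_of_le' tendsto_const_nhds hχ ?_ ?_
  · filter_upwards [eventually_ne_atTop 0] with n hn
    exact le_integral_div_of_mem_maximizingMeasures hμ hn
  · exact Eventually.of_forall fun n => by
      gcongr
      exact integral_le_ciSup_of_continuous μ (hcont n)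

theorem ciInf_integral_div_of_mem_maximizingMeasures (hcont : ∀ n, Continuous (f n))
    (hχ : Tendsto (fun n : ℕ => (⨆ ω, f n ω) / n) atTop (𝓝 χ)) {μ : Measure Ω}
    (hμ : μ ∈ maximizingMeasures T f χ) :
    ⨅ l : ℕ, (∫ ω, f (l + 1) ω ∂μ) / (l + 1) = χ := by
  have hlim : Tendsto (fun l : ℕ => (∫ ω, f (l + 1) ω ∂μ) / (l + 1)) atTop (𝓝 χ) := by
    simpa [Function.comp_def] using
      (tendsto_integral_div_of_mem_maximizingMeasures hcont hχ hμ).comp (tendsto_add_atTop_nat 1)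
  have hlower : χ ∈ lowerBounds (Set.range fun l : ℕ => (∫ ω, f (l + 1) ω ∂μ) / ((l : ℝ) + 1)) := by
    rintro _ ⟨l, rfl⟩
    exact_mod_cast le_integral_div_of_mem_maximizingMeasures hμ l.succ_ne_zero
  exact (isGLB_of_mem_closure hlower
    (mem_closure_of_tendsto hlim (Eventually.of_forall Set.mem_range_self))).ciInf_eq

theorem ae_limsup_div_of_mem_maximizingMeasures (hcont : ∀ n, Continuous (f n))
    (hχ : Tendsto (fun n : ℕ => (⨆ ω, f n ω) / n) atTop (𝓝 χ)) {μ : Measure Ω}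
    (hμ : μ ∈ maximizingMeasures T f χ) :
    ∀ᵐ ω ∂μ, limsup (fun n : ℕ => ((f n ω / n : ℝ) : EReal)) atTop = χ := by
  have := hμ.1.2
  refine ae_limsup_eq_of_ae_le_of_tendsto_integral
    (fun n => (integrable_of_continuous (hcont n)).div_const _)
    (fun n => Eventually.of_forall fun ω => ?_) hχ ?_
  · gcongr
    exact le_ciSup_of_continuous (hcont n) ω
  · simpa only [integral_div] using tendsto_integral_div_of_mem_maximizingMeasures hcont hχ hμ

theorem isExtreme_maximizingMeasures (hcont : ∀ n, Continuous (f n))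
    (hsub : IsSubadditiveOver T f)
    (hχ : Tendsto (fun n : ℕ => (⨆ ω, f n ω) / n) atTop (𝓝 χ)) :
    IsExtreme ℝ≥0∞ {ν : Measure Ω | MeasurePreserving T ν ν ∧ IsProbabilityMeasure ν}
      (maximizingMeasures T f χ) := by
  refine ⟨fun μ hμ => hμ.1, ?_⟩
  rintro ν₁ ⟨hν₁, hν₁_prob⟩ ν₂ ⟨-, hν₂_prob⟩ μ ⟨-, hμ⟩ hseg
  obtain ⟨a, b, ha, hb, hab, hint⟩ := exists_integral_eq_add_of_mem_openSegment hseg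
  have hlim : Tendsto (fun n : ℕ => (χ - b * ((⨆ ω, f n ω) / n)) / a) atTop (𝓝 χ) := by
    have hχ_eq : (χ - b * χ) / a = χ := by
      rw [div_eq_iff ha.ne']
      linear_combination -χ * hab
    simpa only [hχ_eq] using ((hχ.const_mul b).const_sub χ).div_const a
  refine ⟨⟨hν₁, hν₁_prob⟩, mul_le_of_subadditive_of_tendsto
    (hsub.subadditive_integral hν₁ fun n => integrable_of_continuous (hcont n)) hlim ?_⟩
  filter_upwards [eventually_ne_atTop 0] with n hn
  have hsum := hint (f n) (integrable_of_continuous (hcont n)) (integrable_of_continuous (hcont n))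
  have hsup : b * ∫ ω, f n ω ∂ν₂ ≤ b * ⨆ ω, f n ω := by
    gcongr
    exact integral_le_ciSup_of_continuous ν₂ (hcont n)
  field_simp
  linarith [hμ n]

variable [HasOuterApproxClosed Ω]

theorem isClosed_preimage_maximizingMeasures (hT : Continuous T) (hcont : ∀ n, Continuous (f n)) :
    IsClosed ((↑) ⁻¹' maximizingMeasures T f χ : Set (ProbabilityMeasure Ω)) := by
  have heq : ((↑) ⁻¹' maximizingMeasures T f χ : Set (ProbabilityMeasure Ω)) =
      {μ : ProbabilityMeasure Ω | MeasurePreserving T (μ : Measure Ω) μ} ∩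
        ⋂ n : ℕ, {μ : ProbabilityMeasure Ω | n * χ ≤ ∫ ω, f n ω ∂(μ : Measure Ω)} := by
    ext μ
    simp [maximizingMeasures, show IsProbabilityMeasure (μ : Measure Ω) from inferInstance]
  rw [heq]
  exact (isClosed_setOf_measurePreserving hT).inter (isClosed_iInter fun n =>
    isClosed_le continuous_const (continuous_integral_probabilityMeasure (hcont n)))

variable [T2Space Ω] [Nonempty Ω]

theorem maximizingMeasures_nonempty (hT : Continuous T) (hcont : ∀ n, Continuous (f n))
    (hsub : IsSubadditiveOver T f)
    (hχ : Tendsto (fun n : ℕ => (⨆ ω, f n ω) / n) atTop (𝓝 χ)) :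
    (maximizingMeasures T f χ).Nonempty := by
  have hmax (n : ℕ) : ∃ x, f n x = ⨆ ω, f n ω :=
    (isCompact_range (hcont n)).sSup_mem (Set.range_nonempty _)
  choose x hx using hmax
  have h𝒰 : (hyperfilter ℕ : Filter ℕ) ≤ atTop := Nat.hyperfilter_le_atTop
  obtain ⟨μ, hμ_prob, hμ_inv, hμ⟩ := exists_measurePreserving_tendsto_birkhoffAverage hT x h𝒰
  refine ⟨μ, ⟨hμ_inv, hμ_prob⟩, fun l => ?_⟩
  obtain ⟨B, hB⟩ := exists_forall_abs_le_of_continuous hcont l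
  have hlower : Tendsto (fun n : ℕ => l * ((⨆ ω, f n ω) / n) - 3 * (l * B) / n) atTop
      (𝓝 (l * χ)) := by
    simpa using (hχ.const_mul (l : ℝ)).sub (tendsto_const_div_atTop_nhds_zero_nat (3 * (l * B)))
  refine le_of_tendsto_of_tendsto ((hlower.comp (tendsto_add_atTop_nat 1)).mono_left h𝒰)
    (hμ (f l) (hcont l)) (h𝒰 ?_)
  filter_upwards [eventually_ge_atTop l] with n hn
  have hkey := hsub.mul_le_birkhoffSum_add (hn.trans n.le_succ) hB (x (n + 1))
  rw [hx] at hkey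
  rw [Function.comp_apply, birkhoffAverage, smul_eq_mul, ← div_eq_inv_mul, ← mul_div_assoc,
    ← sub_div]
  gcongr
  linarith

theorem exists_ergodic_mem_maximizingMeasures (hT : Continuous T) (hcont : ∀ n, Continuous (f n))
    (hsub : IsSubadditiveOver T f)
    (hχ : Tendsto (fun n : ℕ => (⨆ ω, f n ω) / n) atTop (𝓝 χ)) :
    ∃ μ ∈ maximizingMeasures T f χ, Ergodic T μ := by
  obtain ⟨μ, hμ⟩ := extremePoints_nonempty_of_isCompact_preimage (fun μ hμ => hμ.1.2)
    (isClosed_preimage_maximizingMeasures hT hcont).isCompact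
    (maximizingMeasures_nonempty hT hcont hsub hχ)
  exact ⟨μ, hμ.1, .of_mem_extremePoints
    ((isExtreme_maximizingMeasures hcont hsub hχ).extremePoints_subset_extremePoints hμ)⟩

end MaximizingMeasures

theorem exists_maximizing_ergodic_measure_general
    {Ω : Type*} [TopologicalSpace Ω] [CompactSpace Ω] [T2Space Ω]
    [Nonempty Ω] [MeasurableSpace Ω] [BorelSpace Ω] [HasOuterApproxClosed Ω]
    (T : Ω → Ω) (hT : Continuous T)
    (f : ℕ → Ω → ℝ) (hcont : ∀ n, 1 ≤ n → Continuous (f n))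
    (hsub : ∀ m n : ℕ, 1 ≤ m → 1 ≤ n → ∀ ω : Ω, f (m + n) ω ≤ f n (T^[m] ω) + f m ω)
    (χ : ℝ) (hχ : Tendsto (fun n : ℕ => (⨆ ω : Ω, f n ω) / n) atTop (𝓝 χ)) :
    ∃ μ : Measure Ω, IsProbabilityMeasure μ ∧ Ergodic T μ ∧
      χ = (⨅ ℓ : ℕ, (∫ ω, f (ℓ + 1) ω ∂μ) / (ℓ + 1)) ∧
      ∀ᵐ ω ∂μ, (χ : EReal) = limsup (fun n : ℕ => ((f n ω / n : ℝ) : EReal)) atTop := by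
  set F : ℕ → Ω → ℝ := Function.update f 0 0 with hF
  have hF_of_ne {n : ℕ} (hn : n ≠ 0) : F n = f n := Function.update_of_ne hn ..
  have hF_cont (n : ℕ) : Continuous (F n) := by
    obtain rfl | hn := eq_or_ne n 0
    · simpa [hF] using continuous_zero
    · simpa [hF_of_ne hn] using hcont n (Nat.one_le_iff_ne_zero.2 hn)
  have hF_tendsto : Tendsto (fun n : ℕ => (⨆ ω, F n ω) / n) atTop (𝓝 χ) :=
    hχ.congr' <| (eventually_ne_atTop 0).mono fun n hn => by
      simp only [hF_of_ne hn]
  have hF_div (n : ℕ) (ω : Ω) : F n ω / n = f n ω / n := by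
    obtain rfl | hn := eq_or_ne n 0
    · simp
    · rw [hF_of_ne hn]
  obtain ⟨μ, hμ, hergodic⟩ :=
    exists_ergodic_mem_maximizingMeasures hT hF_cont (.update_zero hsub) hF_tendsto
  refine ⟨μ, hμ.1.2, hergodic, ?_, ?_⟩
  · simpa only [hF_of_ne (Nat.succ_ne_zero _)] using
      (ciInf_integral_div_of_mem_maximizingMeasures hF_cont hF_tendsto hμ).symm
  · simpa only [hF_div, eq_comm] using
      ae_limsup_div_of_mem_maximizingMeasures hF_cont hF_tendsto hμ

/-- **Lemma 2.5 (existence of a maximizing ergodic measure).**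
For a `T`-subadditive sequence of continuous functions on a nonempty compact metrizable
space with joint growth rate `χ`, there is a `T`-ergodic Borel probability measure `μ*`
with `χ = inf_{ℓ ≥ 1} (1/ℓ) ∫ f_ℓ dμ*`, and moreover `χ = limsup (1/n) f_n(ω)` for
`μ*`-almost every `ω`. -/
theorem exists_maximizing_ergodic_measure
    {Ω : Type*} [TopologicalSpace Ω] [CompactSpace Ω] [TopologicalSpace.MetrizableSpace Ω]
    [Nonempty Ω] [MeasurableSpace Ω] [BorelSpace Ω]
    (T : Ω → Ω) (hT : Continuous T)
    (f : ℕ → Ω → ℝ) (hcont : ∀ n, 1 ≤ n → Continuous (f n))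
    (hsub : ∀ m n : ℕ, 1 ≤ m → 1 ≤ n → ∀ ω : Ω, f (m + n) ω ≤ f n (T^[m] ω) + f m ω)
    (χ : ℝ)
    (hχ : Filter.Tendsto (fun n : ℕ => (⨆ ω : Ω, f n ω) / n) Filter.atTop (nhds χ)) :
    ∃ μ : Measure Ω, IsProbabilityMeasure μ ∧ Ergodic T μ ∧
      χ = (⨅ ℓ : ℕ, (∫ ω, f (ℓ + 1) ω ∂μ) / (ℓ + 1)) ∧
      ∀ᵐ ω ∂μ, (χ : EReal) =
        Filter.limsup (fun n : ℕ => ((f n ω / n : ℝ) : EReal)) Filter.atTop :=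
  exists_maximizing_ergodic_measure_general T hT f hcont hsub χ hχ
end

section
/- (Semi-uniform subadditive ergodic theorem.) Let Ω be a nonempty compact metrizable topological space, T : Ω → Ω continuous, and ⟨f_n⟩_{n≥1} a T-subadditive sequence of continuous real-valued functions on Ω. Suppose α ∈ ℝ is such that inf_{n≥1} (1/n) ∫_Ω f_n dμ < α for every T-ergodic Borel probability measure μ on Ω. Then there exists an integer N ≥ 1 such that for every ℓ ≥ N, sup_{ω∈Ω} (1/ℓ) f_ℓ(ω) < α. -/
open Filter Topology MeasureTheory

/-!
Let `β` be the limit of `(1/n) sup f_n`. Subadditivity gives `m f_n ≤ ∑_{i < n} f_m ∘ T^i + O(1)`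
for fixed `m`, so a limit of the empirical measures along orbits maximizing `f_n` is an invariant
measure with `∫ f_m ≥ m β` for every `m ≥ 1`. The invariant measures with this property form a
compact set. It is a face of the set of all invariant probability measures, because no invariant
measure has growth rate above `β`, so the two ends of a segment through a measure of rate `β` both
have rate `β`. By Krein–Milman this face has an extreme point, which is then extreme among all
invariant probability measures, that is, ergodic. Hence if every ergodic measure has growth rate
below `α`, then `β < α`.
-/

open scoped ENNReal NNReal BoundedContinuousFunction

section ExtremePoints

theorem exists_integral_eq_of_mem_openSegment {X E : Type*} [MeasurableSpace X]
    [NormedAddCommGroup E] [NormedSpace ℝ E] {μ ν₁ ν₂ : Measure X}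
    (hμ : μ ∈ openSegment ℝ≥0∞ ν₁ ν₂) :
    ∃ a b : ℝ, 0 < a ∧ 0 < b ∧ a + b = 1 ∧ ∀ g : X → E, Integrable g ν₁ → Integrable g ν₂ →
      ∫ x, g x ∂μ = a • ∫ x, g x ∂ν₁ + b • ∫ x, g x ∂ν₂ := by
  obtain ⟨a, b, ha, hb, hab, rfl⟩ := hμ
  have ha_top : a ≠ ∞ := ne_top_of_le_ne_top ENNReal.one_ne_top (hab ▸ le_self_add)
  have hb_top : b ≠ ∞ := ne_top_of_le_ne_top ENNReal.one_ne_top (hab ▸ le_add_self)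
  refine ⟨a.toReal, b.toReal, ENNReal.toReal_pos ha.ne' ha_top, ENNReal.toReal_pos hb.ne' hb_top,
    by rw [← ENNReal.toReal_add ha_top hb_top, hab, ENNReal.toReal_one], fun g h₁ h₂ => ?_⟩
  rw [integral_add_measure (h₁.smul_measure ha_top) (h₂.smul_measure hb_top),
    integral_smul_measure, integral_smul_measure]

variable {X : Type*} [TopologicalSpace X] [MeasurableSpace X] [BorelSpace X]
  [HasOuterApproxClosed X]

theorem nonempty_extremePoints_image_coe_of_isCompact {F : Set (ProbabilityMeasure X)}
    (hF : IsCompact F) (hne : F.Nonempty) :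
    (Set.extremePoints ℝ≥0∞ ((↑) '' F : Set (Measure X))).Nonempty := by
  -- Krein–Milman needs a locally convex real vector space: a measure is replaced by its integrals
  -- against bounded continuous functions, which determine it.
  let Φ : ProbabilityMeasure X → (X →ᵇ ℝ) → ℝ := fun μ g => ∫ x, g x ∂(μ : Measure X)
  have hΦ : Continuous Φ :=
    continuous_pi ProbabilityMeasure.continuous_integral_boundedContinuousFunction
  obtain ⟨_, ⟨μ, hμ, rfl⟩, hext⟩ := (hF.image hΦ).extremePoints_nonempty (hne.image Φ)
  refine ⟨μ, Set.mem_image_of_mem _ hμ, ?_⟩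
  rintro _ ⟨ν₁, hν₁, rfl⟩ _ ⟨ν₂, hν₂, rfl⟩ hseg
  obtain ⟨a, b, ha, hb, hab, hint⟩ := exists_integral_eq_of_mem_openSegment (E := ℝ) hseg
  have hΦseg : Φ μ ∈ openSegment ℝ (Φ ν₁) (Φ ν₂) :=
    ⟨a, b, ha, hb, hab, funext fun g => (hint g (g.integrable _) (g.integrable _)).symm⟩
  have hΦeq : Φ ν₁ = Φ μ :=
    hext (Set.mem_image_of_mem _ hν₁) (Set.mem_image_of_mem _ hν₂) hΦseg
  exact ext_of_forall_integral_eq_of_IsFiniteMeasure (congrFun hΦeq)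

theorem exists_ergodic_of_isExtreme {T : X → X} {F : Set (ProbabilityMeasure X)}
    (hF : IsCompact F) (hne : F.Nonempty)
    (hext : IsExtreme ℝ≥0∞ {ν : Measure X | MeasurePreserving T ν ν ∧ IsProbabilityMeasure ν}
      ((↑) '' F)) :
    ∃ μ ∈ F, Ergodic T (μ : Measure X) := by
  obtain ⟨_, hμ⟩ := nonempty_extremePoints_image_coe_of_isCompact hF hne
  obtain ⟨μ, hμF, rfl⟩ := hμ.1
  exact ⟨μ, hμF, .of_mem_extremePoints (hext.extremePoints_subset_extremePoints hμ)⟩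

end ExtremePoints

section KrylovBogolyubov

/-- The empirical measure of the first `n + 1` points of the orbit of `x` under `T`. The length is
`n + 1` rather than `n` so that this is always a probability measure. -/
noncomputable def empiricalMeasure {X : Type*} [MeasurableSpace X] (T : X → X) (n : ℕ) (x : X) :
    ProbabilityMeasure X :=
  ⟨birkhoffAverage ℝ≥0 T Measure.dirac (n + 1) x, ⟨by
    simp only [birkhoffAverage, birkhoffSum, Measure.smul_apply, Measure.coe_finsetSum,
      Finset.sum_apply, measure_univ, Finset.sum_const, Finset.card_range, nsmul_eq_mul, mul_one,
      ENNReal.smul_def, smul_eq_mul]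
    rw [← ENNReal.coe_natCast, ← ENNReal.coe_mul, inv_mul_cancel₀ (by positivity),
      ENNReal.coe_one]⟩⟩

variable {X : Type*} [TopologicalSpace X] [MeasurableSpace X]

theorem integral_empiricalMeasure [OpensMeasurableSpace X] (T : X → X) (n : ℕ) (x : X)
    (g : X →ᵇ ℝ) :
    ∫ y, g y ∂(empiricalMeasure T n x : Measure X) = birkhoffAverage ℝ T g (n + 1) x := by
  simp only [empiricalMeasure, ProbabilityMeasure.coe_mk, birkhoffAverage, birkhoffSum]
  rw [integral_smul_nnreal_measure, integral_finsetSum_measure fun _ _ => g.integrable _]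
  simp [integral_dirac' _ _ g.continuous.stronglyMeasurable, NNReal.smul_def]

theorem exists_tendsto_birkhoffAverage [BorelSpace X] [CompactSpace X] [T2Space X] (T : X → X)
    (x : ℕ → X) :
    ∃ (l : Ultrafilter ℕ) (μ : ProbabilityMeasure X), (l : Filter ℕ) ≤ atTop ∧ ∀ g : X →ᵇ ℝ,
      Tendsto (fun n => birkhoffAverage ℝ T g (n + 1) (x n)) l (𝓝 (∫ y, g y ∂(μ : Measure X))) := by
  let l := hyperfilter ℕ
  obtain ⟨μ, -, hμ⟩ := isCompact_univ.ultrafilter_le_nhds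
    (l.map fun n => empiricalMeasure T n (x n)) (by simp)
  refine ⟨l, μ, Nat.hyperfilter_le_atTop, fun g => ?_⟩
  simp only [← integral_empiricalMeasure]
  exact ProbabilityMeasure.tendsto_iff_forall_integral_tendsto.1 hμ g

theorem measurePreserving_of_tendsto_birkhoffAverage [BorelSpace X] [HasOuterApproxClosed X]
    {T : X → X} (hT : Continuous T) {ι : Type*} {l : Filter ι} [l.NeBot] {N : ι → ℕ}
    (hN : Tendsto N l atTop) {x : ι → X} {μ : Measure X} [IsFiniteMeasure μ]
    (hμ : ∀ g : X →ᵇ ℝ, Tendsto (fun i => birkhoffAverage ℝ T g (N i) (x i)) l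
      (𝓝 (∫ y, g y ∂μ))) :
    MeasurePreserving T μ μ := by
  refine ⟨hT.measurable, ext_of_forall_integral_eq_of_IsFiniteMeasure fun g => ?_⟩
  rw [integral_map hT.measurable.aemeasurable g.continuous.aestronglyMeasurable]
  have hshift : Tendsto (fun i => birkhoffAverage ℝ T g (N i) (T (x i))) l
      (𝓝 (∫ y, g (T y) ∂μ)) := by
    refine (hμ (g.compContinuous ⟨T, hT⟩)).congr fun i => ?_
    simp [birkhoffAverage, birkhoffSum, ← Function.iterate_succ_apply',
      Function.iterate_succ_apply]
  have hbound : Tendsto (fun i => 2 * ‖g‖ / (N i : ℝ)) l (𝓝 0) :=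
    (tendsto_const_nhds.div_atTop tendsto_natCast_atTop_atTop).comp hN
  have hdist : Tendsto (fun i => dist (birkhoffAverage ℝ T g (N i) (T (x i)))
      (birkhoffAverage ℝ T g (N i) (x i))) l (𝓝 0) := by
    refine squeeze_zero (fun i => dist_nonneg) (fun i => ?_) hbound
    rw [dist_birkhoffAverage_apply_birkhoffAverage]
    gcongr
    exact g.dist_le_two_norm _ _
  exact dist_eq_zero.1 (tendsto_nhds_unique (hshift.dist (hμ g)) hdist)

end KrylovBogolyubov

theorem abs_birkhoffSum_le {X : Type*} (T : X → X) {g : X → ℝ} {C : ℝ} (hg : ∀ x, |g x| ≤ C)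
    (n : ℕ) (x : X) : |birkhoffSum T g n x| ≤ n * C :=
  calc |birkhoffSum T g n x| ≤ ∑ i ∈ Finset.range n, |g (T^[i] x)| := Finset.abs_sum_le_sum_abs _ _
    _ ≤ ∑ _i ∈ Finset.range n, C := Finset.sum_le_sum fun _ _ => hg _
    _ = n * C := by simp

/-- A subadditive cocycle over `T`: a sequence of functions satisfying the `T`-subadditivity
inequality at all indices, including `0`, so that suprema and integrals of its terms are
`Subadditive` sequences. -/
def IsSubadditiveCocycle {X : Type*} (T : X → X) (f : ℕ → X → ℝ) : Prop :=
  ∀ m n x, f (m + n) x ≤ f n (T^[m] x) + f m x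

namespace IsSubadditiveCocycle

variable {X : Type*} {T : X → X} {f : ℕ → X → ℝ}

theorem update_zero
    (hf : ∀ m n : ℕ, 1 ≤ m → 1 ≤ n → ∀ x, f (m + n) x ≤ f n (T^[m] x) + f m x) :
    IsSubadditiveCocycle T (Function.update f 0 0) := by
  intro m n x
  rcases m.eq_zero_or_pos with rfl | hm
  · simp
  rcases n.eq_zero_or_pos with rfl | hn
  · simp
  · simpa [hm.ne', hn.ne'] using hf m n hm hn x

theorem subadditive_iSup (hf : IsSubadditiveCocycle T f) [Nonempty X]
    (hbdd : ∀ n, BddAbove (Set.range (f n))) : Subadditive fun n => ⨆ x, f n x := fun m n =>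
  ciSup_le fun x => by
    linarith [hf m n x, le_ciSup (hbdd m) x, le_ciSup (hbdd n) (T^[m] x)]

theorem birkhoffSum_add_le (hf : IsSubadditiveCocycle T f) (m n k : ℕ) (x : X) :
    birkhoffSum T (f (m + n)) k x ≤ birkhoffSum T (f n) k (T^[m] x) + birkhoffSum T (f m) k x := by
  simp only [birkhoffSum, ← Finset.sum_add_distrib]
  gcongr with i
  rw [← Function.iterate_add_apply, add_comm i m, Function.iterate_add_apply]
  exact hf m n _

variable {m : ℕ} {B : ℝ}

theorem birkhoffSum_comm_le (hf : IsSubadditiveCocycle T f) (hm : 0 < m)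
    (hB : ∀ i ≤ m, ∀ x, |f i x| ≤ B) (n : ℕ) (x : X) :
    birkhoffSum T (f n) m x ≤ birkhoffSum T (f m) n x + 2 * m * B := by
  induction n using Nat.strong_induction_on generalizing x with
  | _ n ih =>
    rcases lt_or_ge n m with hnm | hmn
    · have hupper : birkhoffSum T (f n) m x ≤ m * B :=
        (abs_le.1 (abs_birkhoffSum_le T (hB n hnm.le) m x)).2
      have hlower : -(n * B) ≤ birkhoffSum T (f m) n x :=
        (abs_le.1 (abs_birkhoffSum_le T (hB m le_rfl) n x)).1
      have hB0 : 0 ≤ B := (abs_nonneg _).trans (hB m le_rfl x)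
      have hnB : (n : ℝ) * B ≤ m * B := by gcongr
      linarith
    · obtain ⟨p, rfl⟩ := Nat.exists_eq_add_of_le hmn
      calc birkhoffSum T (f (m + p)) m x
          ≤ birkhoffSum T (f p) m (T^[m] x) + birkhoffSum T (f m) m x :=
            hf.birkhoffSum_add_le m p m x
        _ ≤ birkhoffSum T (f m) p (T^[m] x) + 2 * m * B + birkhoffSum T (f m) m x := by
            gcongr
            exact ih p (by omega) _
        _ = birkhoffSum T (f m) (m + p) x + 2 * m * B := by
            rw [birkhoffSum_add]
            ring

theorem mul_apply_add_le_birkhoffSum (hf : IsSubadditiveCocycle T f)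
    (hB : ∀ i ≤ m, ∀ x, |f i x| ≤ B) (n : ℕ) (x : X) :
    m * f (m + n) x ≤ birkhoffSum T (f n) m x + 2 * m * B := by
  have hshift : ∀ i ∈ Finset.range m, f (m + n) x ≤ f n (T^[i] x) + 2 * B := by
    -- Cut `m + n` steps into `i`, then `n`, then `j = m - i` steps.
    intro i hi
    obtain ⟨j, rfl⟩ := Nat.exists_eq_add_of_le (Finset.mem_range.1 hi).le
    have hhead := hf i (n + j) x
    have htail := hf n j (T^[i] x)
    have hi_le := (abs_le.1 (hB i (by omega) x)).2
    have hj_le := (abs_le.1 (hB j (by omega) (T^[n] (T^[i] x)))).2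
    rw [show i + j + n = i + (n + j) by omega]
    linarith
  calc m * f (m + n) x = ∑ _i ∈ Finset.range m, f (m + n) x := by simp
    _ ≤ ∑ i ∈ Finset.range m, (f n (T^[i] x) + 2 * B) := Finset.sum_le_sum hshift
    _ = birkhoffSum T (f n) m x + 2 * m * B := by
      simp only [birkhoffSum, Finset.sum_add_distrib, Finset.sum_const, Finset.card_range,
        nsmul_eq_mul]
      ring

theorem mul_apply_le_birkhoffSum (hf : IsSubadditiveCocycle T f) (hm : 0 < m)
    (hB : ∀ i ≤ m, ∀ x, |f i x| ≤ B) {n : ℕ} (hmn : m ≤ n) (x : X) :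
    m * f n x ≤ birkhoffSum T (f m) n x + 5 * m * B := by
  obtain ⟨p, rfl⟩ := Nat.exists_eq_add_of_le' hmn
  have hlast : -(m * B) ≤ birkhoffSum T (f m) m (T^[p] x) :=
    (abs_le.1 (abs_birkhoffSum_le T (hB m le_rfl) m _)).1
  have hcomm := hf.birkhoffSum_comm_le hm hB p x
  have hshift := hf.mul_apply_add_le_birkhoffSum hB p x
  rw [birkhoffSum_add, add_comm p m]
  linarith

theorem subadditive_integral [MeasurableSpace X]
    (hf : IsSubadditiveCocycle T f) {μ : Measure X} (hT : MeasurePreserving T μ μ)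
    (hint : ∀ n, Integrable (f n) μ) : Subadditive fun n => ∫ x, f n x ∂μ := by
  intro m n
  have hTm : MeasurePreserving T^[m] μ μ := hT.iterate m
  have hcomp : Integrable (fun x => f n (T^[m] x)) μ := hTm.integrable_comp_of_integrable (hint n)
  have hinv : ∫ x, f n (T^[m] x) ∂μ = ∫ x, f n x ∂μ := by
    have hmeas : AEStronglyMeasurable (f n) (μ.map T^[m]) :=
      hTm.map_eq.symm ▸ (hint n).aestronglyMeasurable
    rw [← integral_map hTm.aemeasurable hmeas, hTm.map_eq]
  calc ∫ x, f (m + n) x ∂μ ≤ ∫ x, (f n (T^[m] x) + f m x) ∂μ :=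
        integral_mono (hint _) (hcomp.add (hint m)) (hf m n)
    _ = ∫ x, f m x ∂μ + ∫ x, f n x ∂μ := by
        rw [integral_add hcomp (hint m), hinv, add_comm]

end IsSubadditiveCocycle

theorem le_div_of_subadditive_of_le_convexCombination {b c : ℕ → ℝ} {β s t : ℝ}
    (hb : Subadditive b) (hc : Tendsto (fun n : ℕ => c n / n) atTop (𝓝 β)) (hs : 0 < s)
    (hst : s + t = 1) (h : ∀ n : ℕ, n ≠ 0 → β ≤ s * (b n / n) + t * (c n / n)) {n : ℕ}
    (hn : n ≠ 0) : β ≤ b n / n := by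
  by_contra! hlt
  obtain ⟨L, hbL, hLβ⟩ := exists_between hlt
  have hb_lt : ∀ᶠ k : ℕ in atTop, b k / k < L := hb.eventually_div_lt_of_div_lt hn hbL
  have hlim : Tendsto (fun k : ℕ => s * L + t * (c k / k)) atTop (𝓝 (s * L + t * β)) :=
    (hc.const_mul t).const_add (s * L)
  have hlim_lt : s * L + t * β < β := by
    calc s * L + t * β < s * β + t * β := by gcongr
      _ = β := by rw [← add_mul, hst, one_mul]
  obtain ⟨k, hbk, hck, hk⟩ :=
    (hb_lt.and ((hlim.eventually_lt_const hlim_lt).and (eventually_ne_atTop 0))).exists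
  nlinarith [h k hk, mul_lt_mul_of_pos_left hbk hs]

/-- The `T`-invariant probability measures along which `f` has growth rate
`inf_{n ≥ 1} (1/n) ∫ f_n` at least `β`. When `β` is the largest possible growth rate this is a face
of the set of invariant probability measures. -/
def invariantMeasuresGrowthGE {X : Type*} [MeasurableSpace X] (T : X → X) (f : ℕ → X → ℝ) (β : ℝ) :
    Set (ProbabilityMeasure X) :=
  {μ | MeasurePreserving T (μ : Measure X) μ ∧
    ∀ n : ℕ, n ≠ 0 → β ≤ (∫ x, f n x ∂(μ : Measure X)) / n}

theorem isExtreme_invariantMeasuresGrowthGE {X : Type*} [MeasurableSpace X] {T : X → X}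
    {f : ℕ → X → ℝ} (hf : IsSubadditiveCocycle T f)
    (hint : ∀ (μ : Measure X) [IsProbabilityMeasure μ] n, Integrable (f n) μ) {c : ℕ → ℝ}
    (hfc : ∀ n x, f n x ≤ c n) {β : ℝ} (hc : Tendsto (fun n : ℕ => c n / n) atTop (𝓝 β)) :
    IsExtreme ℝ≥0∞ {ν : Measure X | MeasurePreserving T ν ν ∧ IsProbabilityMeasure ν}
      ((↑) '' invariantMeasuresGrowthGE T f β) := by
  refine ⟨?_, ?_⟩
  · rintro _ ⟨μ, hμ, rfl⟩
    exact ⟨hμ.1, inferInstance⟩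
  rintro ν₁ ⟨hν₁, _⟩ ν₂ ⟨_, _⟩ _ ⟨μ, hμ, rfl⟩ hseg
  obtain ⟨s, t, hs, ht, hst, hsplit⟩ := exists_integral_eq_of_mem_openSegment (E := ℝ) hseg
  refine ⟨⟨ν₁, inferInstance⟩, ⟨hν₁, fun n hn => ?_⟩, rfl⟩
  refine le_div_of_subadditive_of_le_convexCombination
    (hf.subadditive_integral hν₁ (hint ν₁)) hc hs hst (fun k hk => ?_) hn
  have hν₂c : ∫ x, f k x ∂ν₂ ≤ c k := by
    simpa using integral_mono (hint ν₂ k) (integrable_const (c k)) (hfc k)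
  calc β ≤ (∫ x, f k x ∂(μ : Measure X)) / k := hμ.2 k hk
    _ = s * ((∫ x, f k x ∂ν₁) / k) + t * ((∫ x, f k x ∂ν₂) / k) := by
        rw [hsplit _ (hint ν₁ k) (hint ν₂ k), smul_eq_mul, smul_eq_mul]
        ring
    _ ≤ s * ((∫ x, f k x ∂ν₁) / k) + t * (c k / k) := by gcongr

theorem exists_forall_le_abs_le {X : Type*} [TopologicalSpace X] [CompactSpace X]
    {f : ℕ → X → ℝ} (hcont : ∀ n, Continuous (f n)) (m : ℕ) :
    ∃ B, ∀ i ≤ m, ∀ x, |f i x| ≤ B := by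
  let F : ℕ → C(X, ℝ) := fun i => ⟨f i, hcont i⟩
  obtain ⟨B, hB⟩ := ((Set.finite_Iic m).image fun i => ‖F i‖).bddAbove
  exact ⟨B, fun i hi x => ((F i).norm_coe_le_norm x).trans (hB (Set.mem_image_of_mem _ hi))⟩

theorem isClosed_measurePreserving {X : Type*} [TopologicalSpace X] [MeasurableSpace X]
    [BorelSpace X] [HasOuterApproxClosed X] {T : X → X} (hT : Continuous T) :
    IsClosed {μ : ProbabilityMeasure X | MeasurePreserving T (μ : Measure X) μ} := by
  have hfixed : {μ : ProbabilityMeasure X | MeasurePreserving T (μ : Measure X) μ} =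
      {μ | μ.map hT.aemeasurable = μ} :=
    Set.ext fun _ => ⟨fun h => Subtype.ext h.map_eq,
      fun h => ⟨hT.measurable, congrArg Subtype.val h⟩⟩
  rw [hfixed]
  exact isClosed_eq (ProbabilityMeasure.continuous_map hT) continuous_id

section Compact

variable {X : Type*} [TopologicalSpace X] [CompactSpace X] [MeasurableSpace X] [BorelSpace X]
  {T : X → X} {f : ℕ → X → ℝ}

theorem isClosed_invariantMeasuresGrowthGE [HasOuterApproxClosed X] (hT : Continuous T)
    (hcont : ∀ n, Continuous (f n)) (β : ℝ) : IsClosed (invariantMeasuresGrowthGE T f β) := by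
  simp only [invariantMeasuresGrowthGE, Set.ofPred_and, Set.ofPred_forall]
  refine (isClosed_measurePreserving hT).inter
    (isClosed_iInter fun n => isClosed_iInter fun _ => isClosed_le continuous_const ?_)
  let fn : C(X, ℝ) := ⟨f n, hcont n⟩
  exact (ProbabilityMeasure.continuous_integral_continuousMap fn).div_const _

theorem nonempty_invariantMeasuresGrowthGE [T2Space X] [HasOuterApproxClosed X]
    (hT : Continuous T) (hf : IsSubadditiveCocycle T f) (hcont : ∀ n, Continuous (f n)) {β : ℝ}
    (hβ : ∀ n : ℕ, n ≠ 0 → ∃ x, β ≤ f n x / n) :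
    (invariantMeasuresGrowthGE T f β).Nonempty := by
  choose x hx using fun n : ℕ => hβ (n + 1) n.succ_ne_zero
  obtain ⟨l, μ, hl, hμ⟩ := exists_tendsto_birkhoffAverage T x
  have hlength : Tendsto (fun n => n + 1) (l : Filter ℕ) atTop :=
    (tendsto_add_atTop_nat 1).mono_left hl
  refine ⟨μ, measurePreserving_of_tendsto_birkhoffAverage hT hlength hμ, fun m hm => ?_⟩
  obtain ⟨B, hB⟩ := exists_forall_le_abs_le hcont m
  have haverage : Tendsto (fun n => birkhoffAverage ℝ T (f m) (n + 1) (x n)) l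
      (𝓝 (∫ y, f m y ∂(μ : Measure X))) := hμ (.mkOfCompact ⟨f m, hcont m⟩)
  have herror : Tendsto (fun n => 5 * m * B / (n + 1 : ℕ)) l (𝓝 0) :=
    (tendsto_const_nhds.div_atTop tendsto_natCast_atTop_atTop).comp hlength
  have hlim := haverage.add herror
  rw [add_zero] at hlim
  have hm_pos : (0 : ℝ) < m := by positivity
  rw [le_div_iff₀ hm_pos]
  refine ge_of_tendsto hlim (hl ?_)
  filter_upwards [eventually_ge_atTop m] with n hn
  calc β * m ≤ f (n + 1) (x n) / (n + 1 : ℕ) * m := by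
        gcongr
        exact hx n
    _ = m * f (n + 1) (x n) / (n + 1 : ℕ) := by ring
    _ ≤ (birkhoffSum T (f m) (n + 1) (x n) + 5 * m * B) / (n + 1 : ℕ) := by
        gcongr
        exact hf.mul_apply_le_birkhoffSum (Nat.pos_of_ne_zero hm) hB (by omega) _
    _ = birkhoffAverage ℝ T (f m) (n + 1) (x n) + 5 * m * B / (n + 1 : ℕ) := by
        rw [birkhoffAverage, smul_eq_mul]
        ring

theorem exists_ergodic_le_integral_div [T2Space X] [HasOuterApproxClosed X] [Nonempty X]
    (hT : Continuous T) (hf : IsSubadditiveCocycle T f) (hcont : ∀ n, Continuous (f n)) {α : ℝ}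
    (hα : ∀ n : ℕ, n ≠ 0 → α ≤ (⨆ x, f n x) / n) :
    ∃ μ : ProbabilityMeasure X, Ergodic T (μ : Measure X) ∧
      ∀ n : ℕ, n ≠ 0 → α ≤ (∫ x, f n x ∂(μ : Measure X)) / n := by
  have hbdd : ∀ n, BddAbove (Set.range (f n)) := fun n => (isCompact_range (hcont n)).bddAbove
  have hsup : Subadditive fun n => ⨆ x, f n x := hf.subadditive_iSup hbdd
  have hsup_bdd : BddBelow (Set.range fun n : ℕ => (⨆ x, f n x) / n) := by
    refine ⟨min α 0, ?_⟩
    rintro _ ⟨n, rfl⟩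
    rcases eq_or_ne n 0 with rfl | hn
    · simp
    · exact (min_le_left _ _).trans (hα n hn)
  have hlim := hsup.tendsto_lim hsup_bdd
  have hα_le : α ≤ hsup.lim := ge_of_tendsto hlim ((eventually_ne_atTop 0).mono hα)
  have hmax : ∀ n : ℕ, n ≠ 0 → ∃ x, hsup.lim ≤ f n x / n := fun n hn => by
    obtain ⟨x, hx⟩ := (isCompact_range (hcont n)).sSup_mem (Set.range_nonempty _)
    exact ⟨x, by simpa only [hx] using! hsup.lim_le_div hsup_bdd hn⟩
  obtain ⟨μ, hμ, hergodic⟩ := exists_ergodic_of_isExtreme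
    (isClosed_invariantMeasuresGrowthGE hT hcont hsup.lim).isCompact
    (nonempty_invariantMeasuresGrowthGE hT hf hcont hmax)
    (isExtreme_invariantMeasuresGrowthGE hf
      (fun _ _ n => (hcont n).integrable_of_hasCompactSupport (.of_compactSpace _))
      (fun n => le_ciSup (hbdd n)) hlim)
  exact ⟨μ, hergodic, fun n hn => hα_le.trans (hμ.2 n hn)⟩

theorem eventually_iSup_div_lt [T2Space X] [HasOuterApproxClosed X] [Nonempty X]
    (hT : Continuous T) (hf : IsSubadditiveCocycle T f) (hcont : ∀ n, Continuous (f n)) {α : ℝ}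
    (hα : ∀ μ : ProbabilityMeasure X, Ergodic T (μ : Measure X) →
      ∃ n : ℕ, n ≠ 0 ∧ (∫ x, f n x ∂(μ : Measure X)) / n < α) :
    ∀ᶠ n : ℕ in atTop, (⨆ x, f n x) / n < α := by
  have hsup : Subadditive fun n => ⨆ x, f n x :=
    hf.subadditive_iSup fun n => (isCompact_range (hcont n)).bddAbove
  by_contra hnot
  have hα_le : ∀ n : ℕ, n ≠ 0 → α ≤ (⨆ x, f n x) / n := fun n hn =>
    le_of_not_gt fun hlt => hnot (hsup.eventually_div_lt_of_div_lt hn hlt)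
  obtain ⟨μ, hergodic, hμ⟩ := exists_ergodic_le_integral_div hT hf hcont hα_le
  obtain ⟨n, hn, hlt⟩ := hα μ hergodic
  exact (hμ n hn).not_gt hlt

end Compact

theorem semi_uniform_subadditive_ergodic_general
    {Ω : Type*} [TopologicalSpace Ω] [CompactSpace Ω] [T2Space Ω] [HasOuterApproxClosed Ω]
    [Nonempty Ω] [MeasurableSpace Ω] [BorelSpace Ω]
    (T : Ω → Ω) (hT : Continuous T)
    (f : ℕ → Ω → ℝ) (hcont : ∀ n, 1 ≤ n → Continuous (f n))
    (hsub : ∀ m n : ℕ, 1 ≤ m → 1 ≤ n → ∀ ω : Ω, f (m + n) ω ≤ f n (T^[m] ω) + f m ω)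
    (α : ℝ)
    (hα : ∀ μ : Measure Ω, IsProbabilityMeasure μ → Ergodic T μ →
      (⨅ n : ℕ, (∫ ω, f (n + 1) ω ∂μ) / (n + 1)) < α) :
    ∃ N : ℕ, 1 ≤ N ∧ ∀ ℓ : ℕ, N ≤ ℓ → (⨆ ω : Ω, f ℓ ω) / ℓ < α := by
  have hg_cont : ∀ n, Continuous (Function.update f 0 0 n) := by
    rintro (_ | n)
    · simpa using! continuous_zero
    · simpa using hcont (n + 1) n.succ_pos
  have hg_integral : ∀ μ : ProbabilityMeasure Ω, Ergodic T (μ : Measure Ω) →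
      ∃ n : ℕ, n ≠ 0 ∧ (∫ ω, Function.update f 0 0 n ω ∂(μ : Measure Ω)) / n < α := by
    intro μ hergodic
    obtain ⟨n, hn⟩ := exists_lt_of_ciInf_lt (hα μ inferInstance hergodic)
    exact ⟨n + 1, n.succ_ne_zero, by simpa using hn⟩
  obtain ⟨N, hN⟩ := eventually_atTop.1
    (eventually_iSup_div_lt hT (.update_zero hsub) hg_cont hg_integral)
  refine ⟨N + 1, by omega, fun ℓ hℓ => ?_⟩
  have hℓ_ne : ℓ ≠ 0 := by omega
  simpa [hℓ_ne] using hN ℓ (by omega)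

/-- **Semi-uniform subadditive ergodic theorem (Schreiber; Sturman–Stark).**
If the growth rate `inf_{n ≥ 1} (1/n) ∫ f_n dμ` is `< α` for every `T`-ergodic Borel
probability measure `μ`, then for all sufficiently large `ℓ`, `sup_ω (1/ℓ) f_ℓ(ω) < α`. -/
theorem semi_uniform_subadditive_ergodic
    {Ω : Type*} [TopologicalSpace Ω] [CompactSpace Ω] [TopologicalSpace.MetrizableSpace Ω]
    [Nonempty Ω] [MeasurableSpace Ω] [BorelSpace Ω]
    (T : Ω → Ω) (hT : Continuous T)
    (f : ℕ → Ω → ℝ) (hcont : ∀ n, 1 ≤ n → Continuous (f n))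
    (hsub : ∀ m n : ℕ, 1 ≤ m → 1 ≤ n → ∀ ω : Ω, f (m + n) ω ≤ f n (T^[m] ω) + f m ω)
    (α : ℝ)
    (hα : ∀ μ : Measure Ω, IsProbabilityMeasure μ → Ergodic T μ →
      (⨅ n : ℕ, (∫ ω, f (n + 1) ω ∂μ) / (n + 1)) < α) :
    ∃ N : ℕ, 1 ≤ N ∧ ∀ ℓ : ℕ, N ≤ ℓ → (⨆ ω : Ω, f ℓ ω) / ℓ < α := by
  exact semi_uniform_subadditive_ergodic_general T hT f hcont hsub α hα
end
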